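/- arXiv:2209.09126 — 5 statements merged into one kernel-verified Lean document; each statement's English description precedes it below -/
import Mathlib

section
/- Suppose ‖T_i‖ < 1/2 for all 1 ≤ i ≤ m, the matrices commute (T_i T_j = T_j T_i for all 1 ≤ i, j ≤ m), and Σ_{i=1}^m |det(T_i)|^2 > 1. Then for Lebesgue-almost every a = (a_1,…,a_m) ∈ ℝ^{md}, the self-affine set K^a has non-empty interior. -/
open MeasureTheory

noncomputable section

namespace SelfAffine

variable {d m : ℕ}

/-- Euclidean operator norm of a `d × d` real matrix. -/
def opNorm (A : Matrix (Fin d) (Fin d) ℝ) : ℝ :=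
  ‖Matrix.toEuclideanCLM (𝕜 := ℝ) A‖

/-- smallest singular value of an invertible matrix, via `α_d(A) = ‖A⁻¹‖⁻¹`. -/
def alphaMin (A : Matrix (Fin d) (Fin d) ℝ) : ℝ := (opNorm A⁻¹)⁻¹

/-- `T_I = T_{i_1} ⋯ T_{i_n}` for a finite word `I ∈ Σ_n`. -/
def wordProd (T : Fin m → Matrix (Fin d) (Fin d) ℝ) {n : ℕ} (I : Fin n → Fin m) :
    Matrix (Fin d) (Fin d) ℝ :=
  (List.ofFn fun k => T (I k)).prod

/-- the coding map `π^a : Σ → ℝ^d`, `π^a(x) = ∑_{n ≥ 0} T_{x|n} a_{x_{n+1}}`. -/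
def codingMap (T : Fin m → Matrix (Fin d) (Fin d) ℝ)
    (a : Fin m → EuclideanSpace ℝ (Fin d)) (x : ℕ → Fin m) : EuclideanSpace ℝ (Fin d) :=
  ∑' n : ℕ, Matrix.toEuclideanCLM (𝕜 := ℝ) (wordProd T fun k : Fin n => x (k : ℕ)) (a (x n))

/-- the self-affine set `K^a = π^a(Σ)`. -/
def attractor (T : Fin m → Matrix (Fin d) (Fin d) ℝ)
    (a : Fin m → EuclideanSpace ℝ (Fin d)) : Set (EuclideanSpace ℝ (Fin d)) :=
  Set.range (codingMap T a)

open Metric Set in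
theorem transv {E F : Type*} [NormedAddCommGroup E] [NormedSpace ℝ E] [FiniteDimensional ℝ E]
    [MeasurableSpace E] [BorelSpace E] [NormedAddCommGroup F] [NormedSpace ℝ F]
    [FiniteDimensional ℝ F] [MeasurableSpace F] [BorelSpace F]
    (μ : Measure E) [μ.IsAddHaarMeasure] (ν : Measure F) [ν.IsAddHaarMeasure]
    (R δ : ℝ) (hδ : 0 < δ) :
    ∃ C : ENNReal, C ≠ ⊤ ∧ ∀ (Φ : F →L[ℝ] E) (J : E →L[ℝ] F), (∀ v, ‖J v‖ ≤ ‖v‖) →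
      (∀ v, δ * ‖v‖ ≤ ‖Φ (J v)‖) → ∀ W : Set E, MeasurableSet W →
        ν (closedBall 0 R ∩ Φ ⁻¹' W) ≤ C * μ W := by
  have : ProperSpace E := FiniteDimensional.proper ℝ E
  have : ProperSpace F := FiniteDimensional.proper ℝ F
  set b := μ (closedBall (0 : E) 1) with hb
  have hb0 : b ≠ 0 := (measure_closedBall_pos μ _ one_pos).ne'
  have hbt : b ≠ ⊤ := measure_closedBall_lt_top.ne
  refine ⟨b⁻¹ * (ν (closedBall 0 (R + 1)) * (b⁻¹ * μ (closedBall 0 δ⁻¹))), ?_, ?_⟩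
  · refine ENNReal.mul_ne_top (ENNReal.inv_ne_top.2 hb0) (ENNReal.mul_ne_top
      measure_closedBall_lt_top.ne (ENNReal.mul_ne_top (ENNReal.inv_ne_top.2 hb0)
      measure_closedBall_lt_top.ne))
  intro Φ J hJ hΦ W hW
  set M : E →L[ℝ] E := Φ.comp J with hM
  have hinj : ∀ v, M v = 0 → v = 0 := by
    intro v hv
    have := hΦ v
    have h2 : ‖Φ (J v)‖ = 0 := by
      have : M v = Φ (J v) := rfl
      rw [← this, hv, norm_zero]
    rw [h2] at this
    have : ‖v‖ ≤ 0 := by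
      by_contra hc
      push Not at hc
      have := mul_pos hδ hc
      linarith
    exact norm_le_zero_iff.1 this
  have hdet : LinearMap.det (M : E →ₗ[ℝ] E) ≠ 0 := by
    intro h0
    have := LinearMap.bot_lt_ker_of_det_eq_zero h0
    obtain ⟨x, hx, hx0⟩ := Submodule.exists_mem_ne_zero_of_ne_bot this.ne'
    exact hx0 (hinj x hx)
  have hpre : ∀ s : Set E, μ (M ⁻¹' s) ≤ (b⁻¹ * μ (closedBall 0 δ⁻¹)) * μ s := by
    intro s
    have h1 := fun s => Measure.addHaar_preimage_linearMap μ hdet s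
    have h2 : μ ((M : E →ₗ[ℝ] E) ⁻¹' (closedBall 0 1)) ≤ μ (closedBall 0 δ⁻¹) := by
      apply measure_mono
      intro v hv
      have h3 : ‖Φ (J v)‖ ≤ 1 := by
        have hv' : M v ∈ closedBall (0 : E) 1 := hv
        rw [mem_closedBall, dist_zero_right] at hv'
        exact hv'
      have := hΦ v
      simp only [mem_closedBall, dist_zero_right]
      rw [← one_div, le_div_iff₀ hδ]
      linarith
    rw [h1] at h2
    have h3 := h1 s
    have : μ (M ⁻¹' s) = μ ((M : E →ₗ[ℝ] E) ⁻¹' s) := rfl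
    rw [this, h3]
    gcongr
    rw [← hb] at h2
    rw [mul_comm b⁻¹, ← div_eq_mul_inv]
    exact (ENNReal.le_div_iff_mul_le (Or.inl hb0) (Or.inl hbt)).2 h2
  set G := closedBall (0 : F) R ∩ Φ ⁻¹' W with hG
  have hGm : MeasurableSet G := measurableSet_closedBall.inter (Φ.continuous.measurable hW)
  have key : b * ν G ≤ ν (closedBall 0 (R + 1)) * ((b⁻¹ * μ (closedBall 0 δ⁻¹)) * μ W) := by
    have hmeas : Measurable (fun p : E × F => G.indicator (fun _ => (1 : ENNReal)) (p.2 + J p.1)) :=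
      (measurable_const.indicator hGm).comp
        ((continuous_snd.add (J.continuous.comp continuous_fst)).measurable)
    calc b * ν G = ∫⁻ v in closedBall (0 : E) 1, ν G ∂μ := by
          rw [setLIntegral_const, mul_comm]
      _ = ∫⁻ v in closedBall (0 : E) 1, ∫⁻ a, G.indicator (fun _ => (1 : ENNReal)) (a + J v) ∂ν ∂μ := by
          congr 1; ext v
          rw [lintegral_add_right_eq_self (fun a => G.indicator (fun _ => (1 : ENNReal)) a),
            lintegral_indicator_const hGm, one_mul]
      _ = ∫⁻ a, ∫⁻ v in closedBall (0 : E) 1, G.indicator (fun _ => (1 : ENNReal)) (a + J v) ∂μ ∂ν := by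
          rw [lintegral_lintegral_swap]
          exact hmeas.aemeasurable
      _ ≤ ∫⁻ a, (closedBall (0 : F) (R + 1)).indicator
            (fun _ => (b⁻¹ * μ (closedBall 0 δ⁻¹)) * μ W) a ∂ν := by
          apply lintegral_mono
          intro a
          by_cases ha : a ∈ closedBall (0 : F) (R + 1)
          · rw [indicator_of_mem ha]
            have hsub : ∀ v, G.indicator (fun _ => (1 : ENNReal)) (a + J v) ≤
                (M ⁻¹' ((fun x => Φ a + x) ⁻¹' W)).indicator (fun _ => (1 : ENNReal)) v := by
              intro v
              by_cases hv : a + J v ∈ G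
              · rw [indicator_of_mem hv, indicator_of_mem]
                have := hv.2
                simpa [hM] using this
              · rw [indicator_of_notMem hv]; exact zero_le
            have hm1 : MeasurableSet (M ⁻¹' ((fun x => Φ a + x) ⁻¹' W)) :=
              M.continuous.measurable ((measurable_const_add _) hW)
            calc _ ≤ ∫⁻ v, (M ⁻¹' ((fun x => Φ a + x) ⁻¹' W)).indicator (fun _ => (1 : ENNReal)) v ∂μ :=
                  (lintegral_mono hsub).trans (setLIntegral_le_lintegral _ _)
              _ = μ (M ⁻¹' ((fun x => Φ a + x) ⁻¹' W)) := by
                  rw [lintegral_indicator_const hm1, one_mul]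
              _ ≤ _ := by
                  refine (hpre _).trans ?_
                  rw [measure_preimage_add]
          · rw [indicator_of_notMem ha]
            refine le_of_eq ?_
            beta_reduce
            rw [setLIntegral_congr_fun (g := fun _ => 0) measurableSet_closedBall]
            · simp
            intro v hv
            apply indicator_of_notMem
            intro h
            apply ha
            have h1 := h.1
            simp only [mem_closedBall, dist_zero_right] at h1 hv ⊢
            calc ‖a‖ = ‖(a + J v) - J v‖ := by simp
              _ ≤ ‖a + J v‖ + ‖J v‖ := norm_sub_le _ _
              _ ≤ R + 1 := add_le_add h1 ((hJ v).trans hv)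
      _ = _ := by
          rw [lintegral_indicator_const measurableSet_closedBall, mul_comm]
  calc ν G = b⁻¹ * (b * ν G) := by
        rw [← mul_assoc, ENNReal.inv_mul_cancel hb0 hbt, one_mul]
    _ ≤ b⁻¹ * (ν (closedBall 0 (R + 1)) * ((b⁻¹ * μ (closedBall 0 δ⁻¹)) * μ W)) := by gcongr
    _ = _ := by ring

open Pointwise in
/-- Steinhaus for two sets. -/
theorem steinhaus_add {E : Type*} [NormedAddCommGroup E] [NormedSpace ℝ E] [FiniteDimensional ℝ E]
    [MeasurableSpace E] [BorelSpace E] (μ : Measure E) [μ.IsAddHaarMeasure]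
    (A B : Set E) (hA : MeasurableSet A) (hB : MeasurableSet B) (hA0 : μ A ≠ 0) (hB0 : μ B ≠ 0) :
    ∃ x, ∃ U ∈ nhds x, ∀ y ∈ U, ∃ a ∈ A, ∃ b ∈ B, a + b = y := by
  have : ProperSpace E := FiniteDimensional.proper ℝ E
  have hex : ∃ x, μ (A ∩ (fun y => x - y) ⁻¹' B) ≠ 0 := by
    by_contra hc
    push Not at hc
    have h1 : ∫⁻ x, μ (A ∩ (fun y => x - y) ⁻¹' B) ∂μ = μ A * μ B := by
      have h2 : ∀ x, μ (A ∩ (fun y => x - y) ⁻¹' B) =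
          ∫⁻ y, A.indicator (fun _ => (1 : ENNReal)) y * B.indicator (fun _ => 1) (x - y) ∂μ := by
        intro x
        have hm : MeasurableSet (A ∩ (fun y => x - y) ⁻¹' B) :=
          hA.inter ((measurable_const.sub measurable_id) hB)
        rw [← one_mul (μ _), ← lintegral_indicator_const hm]
        congr 1; ext y
        by_cases h1 : y ∈ A <;> by_cases h2 : x - y ∈ B <;> simp [Set.indicator, h1, h2]
      simp_rw [h2]
      rw [lintegral_lintegral_swap]
      · have : ∀ y, ∫⁻ x, A.indicator (fun _ => (1 : ENNReal)) y * B.indicator (fun _ => 1) (x - y) ∂μ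
            = A.indicator (fun _ => (1 : ENNReal)) y * μ B := by
          intro y
          rw [lintegral_const_mul]
          · rw [lintegral_sub_right_eq_self (fun x => B.indicator (fun _ => (1 : ENNReal)) x),
              lintegral_indicator_const hB, one_mul]
          · exact (measurable_const.indicator hB).comp (measurable_id.sub measurable_const)
        simp_rw [this]
        rw [lintegral_mul_const _ (measurable_const.indicator hA), lintegral_indicator_const hA, one_mul]
      · apply Measurable.aemeasurable
        exact ((measurable_const.indicator hA).comp measurable_snd).mul
          ((measurable_const.indicator hB).comp (measurable_fst.sub measurable_snd))
    simp only [hc, lintegral_zero] at h1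
    exact (mul_ne_zero hA0 hB0) h1.symm
  obtain ⟨x, hx⟩ := hex
  have hm : MeasurableSet (A ∩ (fun y => x - y) ⁻¹' B) :=
    hA.inter ((measurable_const.sub measurable_id) hB)
  have hn := Measure.sub_mem_nhds_zero_of_addHaar_pos μ _ hm (pos_iff_ne_zero.2 hx)
  refine ⟨x, (fun y => y - x) ⁻¹' (A ∩ (fun y => x - y) ⁻¹' B - A ∩ (fun y => x - y) ⁻¹' B), ?_, ?_⟩
  · have : Filter.Tendsto (fun y => y - x) (nhds x) (nhds 0) := by
      have : Continuous (fun y => y - x) := by fun_prop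
      simpa using this.tendsto x
    exact this hn
  · rintro y ⟨g, hg, g', hg', hgg⟩
    refine ⟨g, hg.1, x - g', hg'.2, ?_⟩
    have : g - g' = y - x := hgg
    rw [← add_sub_assoc, add_sub_right_comm, this]; abel

/-- Cauchy-Schwarz covering inequality. -/
theorem cs_cover {X I : Type*} [MeasurableSpace X] [Fintype I] (μ : Measure X) (B : I → Set X)
    (hB : ∀ i, MeasurableSet (B i)) :
    (∑ i, μ (B i)) ^ 2 ≤ μ (⋃ i, B i) * ∑ i, ∑ j, μ (B i ∩ B j) := by
  set f : X → ENNReal := fun x => ∑ i, (B i).indicator (fun _ => 1) x with hf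
  set g : X → ENNReal := (⋃ i, B i).indicator (fun _ => 1) with hg
  have hfm : Measurable f := Finset.measurable_sum _ fun i _ => measurable_const.indicator (hB i)
  have hU : MeasurableSet (⋃ i, B i) := MeasurableSet.iUnion hB
  have hgm : Measurable g := measurable_const.indicator hU
  have h := ENNReal.lintegral_mul_le_Lp_mul_Lq μ (Real.HolderConjugate.two_two) hfm.aemeasurable
    hgm.aemeasurable
  have h1 : ∫⁻ x, (f * g) x ∂μ = ∑ i, μ (B i) := by
    have : ∀ x, (f * g) x = f x := by
      intro x
      by_cases hx : x ∈ ⋃ i, B i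
      · simp [hg, hx]
      · have : f x = 0 := by
          simp only [hf]
          apply Finset.sum_eq_zero
          intro i _
          apply Set.indicator_of_notMem
          intro h; exact hx (Set.mem_iUnion.2 ⟨i, h⟩)
        simp [this]
    simp_rw [this]
    rw [lintegral_finsetSum _ fun i _ => measurable_const.indicator (hB i)]
    congr 1; ext i
    rw [lintegral_indicator_const (hB i), one_mul]
  have h2 : ∫⁻ x, f x ^ (2 : ℝ) ∂μ = ∑ i, ∑ j, μ (B i ∩ B j) := by
    have : ∀ x, f x ^ (2 : ℝ) = ∑ i, ∑ j, (B i ∩ B j).indicator (fun _ => 1) x := by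
      intro x
      rw [ENNReal.rpow_two, pow_two, hf, Finset.sum_mul_sum]
      congr 1; ext i; congr 1; ext j
      by_cases h1 : x ∈ B i <;> by_cases h2 : x ∈ B j <;> simp [Set.indicator, h1, h2]
    simp_rw [this]
    rw [lintegral_finsetSum]
    · congr 1; ext i
      rw [lintegral_finsetSum]
      · congr 1; ext j
        rw [lintegral_indicator_const ((hB i).inter (hB j)), one_mul]
      · exact fun j _ => measurable_const.indicator ((hB i).inter (hB j))
    · exact fun i _ => Finset.measurable_sum _ fun j _ => measurable_const.indicator ((hB i).inter (hB j))
  have h3 : ∫⁻ x, g x ^ (2 : ℝ) ∂μ = μ (⋃ i, B i) := by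
    have : ∀ x, g x ^ (2 : ℝ) = g x := by
      intro x
      by_cases h1 : x ∈ ⋃ i, B i <;> simp [hg, h1]
    simp_rw [this]
    rw [hg, lintegral_indicator_const hU, one_mul]
  rw [h1, h2, h3] at h
  calc _ ≤ _ := pow_le_pow_left' h 2
    _ = _ := by
      rw [mul_pow, ← ENNReal.rpow_two, ← ENNReal.rpow_two, ← ENNReal.rpow_mul, ← ENNReal.rpow_mul]
      norm_num [mul_comm]

/-- finding a good type -/
theorem exists_type {m : ℕ} (p : Fin m → ℝ) (hp : 1 < ∑ i, p i) :
    ∃ D : Finset (List (Fin m)), (∀ w ∈ D, w ≠ []) ∧ (∀ w ∈ D, ∀ w' ∈ D, List.Perm w w') ∧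
      1 < ∑ w ∈ D, (w.map p).prod := by
  classical
  obtain ⟨n, hn1, hn⟩ : ∃ n : ℕ, 1 ≤ n ∧ ((n : ℝ) + 1) ^ m < (∑ i, p i) ^ n := by
    have h := tendsto_pow_const_div_const_pow_of_one_lt m hp
    have h' := (Filter.tendsto_add_atTop_iff_nat 1).2 h
    have h0 : (0 : ℝ) < (∑ i, p i)⁻¹ := by positivity
    obtain ⟨n, hn, hn1⟩ := ((h'.eventually (gt_mem_nhds h0)).and (Filter.eventually_ge_atTop 1)).exists
    refine ⟨n, hn1, ?_⟩
    have hs : (0 : ℝ) < ∑ i, p i := by linarith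
    rw [div_lt_iff₀ (by positivity), pow_succ, mul_comm (_ ^ n), ← mul_assoc,
      inv_mul_cancel₀ hs.ne', one_mul] at hn
    exact_mod_cast hn
  let τ : (Fin n → Fin m) → (Fin m → Fin (n + 1)) := fun w i =>
    ⟨(List.ofFn w).count i, by
      have := List.count_le_length (a := i) (l := List.ofFn w)
      rw [List.length_ofFn] at this
      omega⟩
  have hsum : (Finset.univ : Finset (Fin m → Fin (n + 1))).card • (1 : ℝ) <
      ∑ w : Fin n → Fin m, ∏ l, p (w l) := by
    have : (∑ i, p i) ^ n = ∑ w : Fin n → Fin m, ∏ l, p (w l) := by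
      simpa using Fintype.sum_pow p n
    rw [← this]
    simpa using hn
  obtain ⟨k, -, hk⟩ := Finset.exists_lt_sum_fiber_of_maps_to_of_nsmul_lt_sum
    (s := (Finset.univ : Finset (Fin n → Fin m))) (f := τ) (t := Finset.univ) (by simp) hsum
  refine ⟨(Finset.univ.filter (fun w => τ w = k)).image List.ofFn, ?_, ?_, ?_⟩
  · intro w hw
    obtain ⟨v, -, rfl⟩ := Finset.mem_image.1 hw
    intro h
    have := congrArg List.length h
    simp at this
    omega
  · intro w hw w' hw'
    obtain ⟨v, hv, rfl⟩ := Finset.mem_image.1 hw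
    obtain ⟨v', hv', rfl⟩ := Finset.mem_image.1 hw'
    rw [List.perm_iff_count]
    intro i
    have h1 : τ v = τ v' := by
      rw [(Finset.mem_filter.1 hv).2, (Finset.mem_filter.1 hv').2]
    have := congrFun h1 i
    simpa [τ] using this
  · rw [Finset.sum_image (fun x _ y _ h => List.ofFn_injective h)]
    refine hk.trans_le (le_of_eq ?_)
    apply Finset.sum_congr rfl
    intro w _
    rw [List.map_ofFn, List.prod_ofFn]
    rfl

section words

variable {E : Type*} [NormedAddCommGroup E] [NormedSpace ℝ E] {m : ℕ}

/-- linear part of a word -/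
def PP (L : Fin m → E →L[ℝ] E) (w : List (Fin m)) : E →L[ℝ] E := (w.map L).prod

theorem PP_nil (L : Fin m → E →L[ℝ] E) : PP L [] = 1 := rfl

theorem PP_cons (L : Fin m → E →L[ℝ] E) (s : Fin m) (w : List (Fin m)) :
    PP L (s :: w) = L s * PP L w := by simp [PP]

theorem PP_append (L : Fin m → E →L[ℝ] E) (u w : List (Fin m)) :
    PP L (u ++ w) = PP L u * PP L w := by simp [PP]

theorem PP_perm (L : Fin m → E →L[ℝ] E) (hc : ∀ i j, L i * L j = L j * L i)
    {u w : List (Fin m)} (h : List.Perm u w) : PP L u = PP L w := by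
  unfold PP
  apply (h.map L).prod_eq'
  rw [List.pairwise_map]
  exact List.pairwise_of_forall (fun i j => hc i j)

/-- translation part of a word, as a linear map in the translation vector -/
def dg (L : Fin m → E →L[ℝ] E) : List (Fin m) → ((Fin m → E) →L[ℝ] E)
  | [] => 0
  | s :: w => ContinuousLinearMap.proj s + (L s).comp (dg L w)

theorem dg_nil (L : Fin m → E →L[ℝ] E) (a : Fin m → E) : dg L [] a = 0 := rfl

theorem dg_cons (L : Fin m → E →L[ℝ] E) (s : Fin m) (w : List (Fin m)) (a : Fin m → E) :
    dg L (s :: w) a = a s + L s (dg L w a) := rfl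

theorem dg_append (L : Fin m → E →L[ℝ] E) (u w : List (Fin m)) (a : Fin m → E) :
    dg L (u ++ w) a = dg L u a + PP L u (dg L w a) := by
  induction u with
  | nil => simp [dg_nil, PP_nil]
  | cons s u ih => simp [dg_cons, PP_cons, ih, add_assoc]

/-- words of length `k` in the alphabet `D` -/
def Wd (D : Type) : ℕ → Type
  | 0 => PUnit
  | k + 1 => D × Wd D k

instance instFintypeWd (D : Type) [Fintype D] : ∀ k, Fintype (Wd D k)
  | 0 => inferInstanceAs (Fintype PUnit)
  | k + 1 =>
    have := instFintypeWd D k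
    inferInstanceAs (Fintype (D × Wd D k))

theorem sum_Wd_succ {D : Type} [Fintype D] (k : ℕ) {M : Type*} [AddCommMonoid M]
    (f : D × Wd D k → M) : ∑ i : Wd D (k + 1), f i = ∑ w : D, ∑ ws : Wd D k, f (w, ws) :=
  Fintype.sum_prod_type f

theorem card_Wd (D : Type) [Fintype D] (k : ℕ) : Fintype.card (Wd D k) = Fintype.card D ^ k := by
  induction k with
  | zero => rfl
  | succ k ih =>
    have : Fintype.card (Wd D (k + 1)) = Fintype.card (D × Wd D k) := rfl
    rw [this, Fintype.card_prod, ih, pow_succ, mul_comm]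

/-- the points of the finite approximation -/
def yy (L : Fin m → E →L[ℝ] E) (S : E →L[ℝ] E) (D : Finset (List (Fin m))) :
    (k : ℕ) → Wd D k → ((Fin m → E) →L[ℝ] E)
  | 0, _ => 0
  | k + 1, i => dg L i.1.1 + S.comp (yy L S D k i.2)

theorem yy_succ (L : Fin m → E →L[ℝ] E) (S : E →L[ℝ] E) (D : Finset (List (Fin m))) (k : ℕ)
    (w : D) (ws : Wd D k) :
    yy L S D (k + 1) (w, ws) = dg L w.1 + S.comp (yy L S D k ws) := rfl

variable (L : Fin m → E →L[ℝ] E) {ρ : ℝ} (hρ0 : 0 ≤ ρ) (hρ1 : ρ < 1) (hL : ∀ i, ‖L i‖ ≤ ρ)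

theorem bound_step {ρ : ℝ} (hρ0 : 0 ≤ ρ) (hρ1 : ρ < 1) (hL : ∀ i, ‖L i‖ ≤ ρ) {M : ℝ}
    (b : Fin m → E) (hb : ∀ i, ‖b i‖ ≤ M)
    (w : List (Fin m)) (z : E) (hz : ‖z‖ ≤ M / (1 - ρ)) :
    ‖dg L w b + PP L w z‖ ≤ M / (1 - ρ) := by
  induction w with
  | nil => simpa [dg_nil, PP_nil] using hz
  | cons s w ih =>
    have h : dg L (s :: w) b + PP L (s :: w) z = b s + L s (dg L w b + PP L w z) := by
      simp [dg_cons, PP_cons, add_assoc]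
    rw [h]
    have h1 : ‖L s (dg L w b + PP L w z)‖ ≤ ρ * (M / (1 - ρ)) :=
      ((L s).le_opNorm _).trans (mul_le_mul (hL s) ih (norm_nonneg _) hρ0)
    have h2 : M + ρ * (M / (1 - ρ)) = M / (1 - ρ) := by
      have : 1 - ρ ≠ 0 := by linarith
      field_simp; ring
    calc _ ≤ ‖b s‖ + ‖L s (dg L w b + PP L w z)‖ := norm_add_le _ _
      _ ≤ M + ρ * (M / (1 - ρ)) := add_le_add (hb s) h1
      _ = _ := h2

theorem PP_norm {ρ : ℝ} (hρ0 : 0 ≤ ρ) (hρ1 : ρ ≤ 1) (hL : ∀ i, ‖L i‖ ≤ ρ) (w : List (Fin m)) (x : E) :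
    ‖PP L w x‖ ≤ ‖x‖ := by
  induction w with
  | nil => simp [PP_nil]
  | cons s w ih =>
    rw [PP_cons]
    calc ‖L s (PP L w x)‖ ≤ ‖L s‖ * ‖PP L w x‖ := (L s).le_opNorm _
      _ ≤ 1 * ‖x‖ := mul_le_mul ((hL s).trans hρ1) ih (norm_nonneg _) zero_le_one
      _ = _ := one_mul _

theorem PP_norm_lt {ρ : ℝ} (hρ0 : 0 ≤ ρ) (hρ1 : ρ ≤ 1) (hL : ∀ i, ‖L i‖ ≤ ρ) (w : List (Fin m))
    (hw : w ≠ []) : ‖PP L w‖ ≤ ρ := by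
  cases w with
  | nil => exact absurd rfl hw
  | cons s w =>
    refine ContinuousLinearMap.opNorm_le_bound _ hρ0 (fun x => ?_)
    rw [PP_cons]
    calc ‖L s (PP L w x)‖ ≤ ‖L s‖ * ‖PP L w x‖ := (L s).le_opNorm _
      _ ≤ ρ * ‖x‖ := mul_le_mul (hL s) (PP_norm L hρ0 hρ1 hL w x) (norm_nonneg _) hρ0

theorem bound_yy {ρ : ℝ} (hρ0 : 0 ≤ ρ) (hρ1 : ρ < 1) (hL : ∀ i, ‖L i‖ ≤ ρ) {M : ℝ} (hM : 0 ≤ M)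
    (b : Fin m → E) (hb : ∀ i, ‖b i‖ ≤ M) (A : E →L[ℝ] E) (D : Finset (List (Fin m)))
    (hD : ∀ w ∈ D, PP L w = A) (hA : ∀ x, ‖A x‖ ≤ ‖x‖) (k : ℕ) (i : Wd D k) :
    ‖yy L (A * A) D k i b‖ ≤ M / (1 - ρ) := by
  induction k with
  | zero =>
    have : 0 ≤ M / (1 - ρ) := div_nonneg hM (by linarith)
    simpa [yy] using this
  | succ k ih =>
    obtain ⟨w, ws⟩ := i
    have h := bound_step L hρ0 hρ1 hL b hb w.1 (A (yy L (A * A) D k ws b)) ((hA _).trans (ih ws))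
    rw [hD _ w.2] at h
    rw [yy_succ]
    simpa using h

theorem list_diff {α : Type*} (w w' : List α) (hl : w.length = w'.length) (h : w ≠ w') :
    ∃ u s r t r2, s ≠ t ∧ w = u ++ s :: r ∧ w' = u ++ t :: r2 := by
  induction w generalizing w' with
  | nil =>
    cases w' with
    | nil => exact absurd rfl h
    | cons b w' => simp at hl
  | cons a w ih =>
    cases w' with
    | nil => simp at hl
    | cons b w' =>
      by_cases hab : a = b
      · subst hab
        obtain ⟨u, s, r, t, r2, h1, h2, h3⟩ := ih w' (by simpa using hl) (by simpa using h)
        exact ⟨a :: u, s, r, t, r2, h1, by simp [h2], by simp [h3]⟩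
      · exact ⟨[], a, w, b, w', hab, rfl, rfl⟩

/-- the direction of variation -/
def JJ (s t : Fin m) : E →L[ℝ] (Fin m → E) :=
  ContinuousLinearMap.single ℝ (fun _ : Fin m => E) s -
    ContinuousLinearMap.single ℝ (fun _ : Fin m => E) t

theorem JJ_s {s t : Fin m} (h : s ≠ t) (v : E) : JJ s t v s = v := by
  simp [JJ, Pi.single_eq_of_ne h]

theorem JJ_t {s t : Fin m} (h : s ≠ t) (v : E) : JJ s t v t = -v := by
  simp [JJ, Pi.single_eq_of_ne h.symm]

theorem JJ_norm {s t : Fin m} (h : s ≠ t) (v : E) (i : Fin m) : ‖JJ s t v i‖ ≤ ‖v‖ := by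
  by_cases h1 : i = s
  · subst h1; rw [JJ_s h]
  · by_cases h2 : i = t
    · subst h2; rw [JJ_t h, norm_neg]
    · simp [JJ, Pi.single_eq_of_ne h1, Pi.single_eq_of_ne h2]

theorem transv_struct {ρ : ℝ} (hρ0 : 0 ≤ ρ) (hρ1 : ρ < 1 / 2) (hL : ∀ i, ‖L i‖ ≤ ρ)
    (hc : ∀ i j, L i * L j = L j * L i) (A : E →L[ℝ] E) (κ : ℝ) (hκ : 0 ≤ κ)
    (hκA : ∀ x, κ * ‖x‖ ≤ ‖A x‖)
    (D : Finset (List (Fin m))) (hD : ∀ w ∈ D, PP L w = A) (hA : ∀ x, ‖A x‖ ≤ ‖x‖)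
    (hperm : ∀ w ∈ D, ∀ w' ∈ D, List.Perm w w') (k : ℕ)
    (w w' : D) (hw : w ≠ w') (i j : Wd D k) :
    ∃ J : E →L[ℝ] (Fin m → E), (∀ v, ‖J v‖ ≤ ‖v‖) ∧
      ∀ v, (κ * (2 - 2 * ρ / (1 - ρ))) * ‖v‖ ≤
        ‖(yy L (A * A) D (k + 1) (w, i) - yy L (A * A) D (k + 1) (w', j)) (J v)‖ := by
  obtain ⟨u, s, r, t, r2, hst, h1, h2⟩ := list_diff w.1 w'.1
    (hperm _ w.2 _ w'.2).length_eq (fun h => hw (Subtype.ext h))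
  refine ⟨JJ s t, fun v => (pi_norm_le_iff_of_nonneg (norm_nonneg _)).2 (JJ_norm hst v), fun v => ?_⟩
  have hρ : ρ < 1 := by linarith
  set b := JJ s t v with hb
  have hbM : ∀ i, ‖b i‖ ≤ ‖v‖ := JJ_norm hst v
  set z := A (yy L (A * A) D k i b) with hz
  set z' := A (yy L (A * A) D k j b) with hz'
  have hzb : ‖z‖ ≤ ‖v‖ / (1 - ρ) :=
    (hA _).trans (bound_yy L hρ0 hρ hL (norm_nonneg _) b hbM A D hD hA k i)
  have hzb' : ‖z'‖ ≤ ‖v‖ / (1 - ρ) :=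
    (hA _).trans (bound_yy L hρ0 hρ hL (norm_nonneg _) b hbM A D hD hA k j)
  set X := dg L r b + PP L r z with hX
  set X' := dg L r2 b + PP L r2 z' with hX'
  have hXb := bound_step L hρ0 hρ hL b hbM r z hzb
  have hXb' := bound_step L hρ0 hρ hL b hbM r2 z' hzb'
  have e1 : yy L (A * A) D (k + 1) (w, i) b = dg L u b + PP L u (v + L s X) := by
    have : yy L (A * A) D (k + 1) (w, i) b = dg L w.1 b + PP L w.1 z := by
      rw [yy_succ, hD _ w.2]; rfl
    rw [this, h1, dg_append, PP_append, dg_cons, PP_cons, hb, JJ_s hst, ← hb]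
    simp [hX, add_assoc]
  have e2 : yy L (A * A) D (k + 1) (w', j) b = dg L u b + PP L u (-v + L t X') := by
    have : yy L (A * A) D (k + 1) (w', j) b = dg L w'.1 b + PP L w'.1 z' := by
      rw [yy_succ, hD _ w'.2]; rfl
    rw [this, h2, dg_append, PP_append, dg_cons, PP_cons, hb, JJ_t hst, ← hb]
    simp [hX', add_assoc]
  have e3 : (yy L (A * A) D (k + 1) (w, i) - yy L (A * A) D (k + 1) (w', j)) b
      = PP L u ((2 : ℝ) • v - (L t X' - L s X)) := by
    rw [sub_apply, e1, e2, two_smul]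
    simp only [map_add, map_sub, map_neg, sub_self]
    abel
  rw [e3]
  set Y := (2 : ℝ) • v - (L t X' - L s X) with hY
  have hYb : (2 - 2 * ρ / (1 - ρ)) * ‖v‖ ≤ ‖Y‖ := by
    have a1 : ‖L s X‖ ≤ ρ * (‖v‖ / (1 - ρ)) :=
      ((L s).le_opNorm _).trans (mul_le_mul (hL s) hXb (norm_nonneg _) hρ0)
    have a2 : ‖L t X'‖ ≤ ρ * (‖v‖ / (1 - ρ)) :=
      ((L t).le_opNorm _).trans (mul_le_mul (hL t) hXb' (norm_nonneg _) hρ0)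
    have a3 : ‖(2 : ℝ) • v‖ = 2 * ‖v‖ := by rw [norm_smul]; norm_num
    have a4 := norm_sub_norm_le ((2 : ℝ) • v) (L t X' - L s X)
    have a5 := norm_sub_le (L t X') (L s X)
    rw [a3] at a4
    have : (2 - 2 * ρ / (1 - ρ)) * ‖v‖ = 2 * ‖v‖ - 2 * (ρ * (‖v‖ / (1 - ρ))) := by ring
    rw [this]
    linarith
  have hAu : ‖A Y‖ ≤ ‖PP L u Y‖ := by
    have : A = PP L (s :: r) * PP L u := by
      rw [← PP_append, ← hD _ w.2, h1]
      exact PP_perm L hc List.perm_append_comm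
    rw [this]
    exact PP_norm L hρ0 hρ.le hL (s :: r) (PP L u Y)
  calc κ * (2 - 2 * ρ / (1 - ρ)) * ‖v‖ = κ * ((2 - 2 * ρ / (1 - ρ)) * ‖v‖) := by ring
    _ ≤ κ * ‖Y‖ := by gcongr
    _ ≤ _ := (hκA Y).trans hAu

end words

theorem ennreal_rec (G : ℕ → ENNReal) (N s c : ENNReal) (hN : N ≠ ⊤) (hs : s ≠ ⊤) (hc : c ≠ ⊤)
    (h1 : 1 < N * s) (h0 : G 0 ≠ ⊤)
    (h : ∀ k, G (k + 1) ≤ N * G k + (N ^ 2 * s) ^ (k + 1) * c) :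
    ∃ M : ENNReal, M ≠ ⊤ ∧ ∀ k, G k ≤ M * (N ^ 2 * s) ^ k := by
  set β := N * s with hβ
  have hβt : β ≠ ⊤ := ENNReal.mul_ne_top hN hs
  set ε := β - 1 with hε
  have hε0 : ε ≠ 0 := (tsub_pos_of_lt h1).ne'
  have hεt : ε ≠ ⊤ := ENNReal.sub_ne_top hβt
  have hβε : β = 1 + ε := (add_tsub_cancel_of_le h1.le).symm
  refine ⟨G 0 + β * c / ε, ?_, ?_⟩
  · exact ENNReal.add_ne_top.2 ⟨h0, ENNReal.div_ne_top (ENNReal.mul_ne_top hβt hc) hε0⟩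
  set M := G 0 + β * c / ε with hM
  have hMβ : M + β * c ≤ β * M := by
    calc M + β * c = M + ε * (β * c / ε) := by rw [ENNReal.mul_div_cancel hε0 hεt]
      _ ≤ M + ε * M := by gcongr; exact le_add_self
      _ = β * M := by rw [hβε, add_mul, one_mul]
  intro k
  induction k with
  | zero => simp [hM]
  | succ k ih =>
    calc G (k + 1) ≤ N * G k + (N ^ 2 * s) ^ (k + 1) * c := h k
      _ ≤ N * (M * (N ^ 2 * s) ^ k) + (N ^ 2 * s) ^ (k + 1) * c := by gcongr
      _ = (N ^ 2 * s) ^ k * N * (M + β * c) := by rw [hβ]; ring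
      _ ≤ (N ^ 2 * s) ^ k * N * (β * M) := by gcongr
      _ = _ := by rw [hβ]; ring

section counting
open Metric Set

variable {E : Type*} [NormedAddCommGroup E] [NormedSpace ℝ E] [FiniteDimensional ℝ E]
    [MeasurableSpace E] [BorelSpace E] {m : ℕ}

theorem measure_pow_image (μ : Measure E) [μ.IsAddHaarMeasure] (S : E →L[ℝ] E) (k : ℕ) (Q : Set E) :
    μ ((S ^ k : E →L[ℝ] E) '' Q) = ENNReal.ofReal |S.det| ^ k * μ Q := by
  rw [Measure.addHaar_image_continuousLinearMap]
  congr 1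
  have : (S ^ k : E →L[ℝ] E).det = S.det ^ k := by
    unfold ContinuousLinearMap.det
    rw [← map_pow]
    congr 1
    ext x
    simp
  change ENNReal.ofReal |(S ^ k : E →L[ℝ] E).det| = _
  rw [this, abs_pow, ENNReal.ofReal_pow (abs_nonneg _)]

theorem counting [BorelSpace (Fin m → E)] (L : Fin m → E →L[ℝ] E) {ρ : ℝ} (hρ0 : 0 ≤ ρ) (hρ1 : ρ < 1 / 2)
    (hL : ∀ i, ‖L i‖ ≤ ρ)
    (hc : ∀ i j, L i * L j = L j * L i) (A : E →L[ℝ] E) (κ : ℝ) (hκ : 0 < κ)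
    (hκA : ∀ x, κ * ‖x‖ ≤ ‖A x‖)
    (D : Finset (List (Fin m))) (hD : ∀ w ∈ D, PP L w = A) (hA : ∀ x, ‖A x‖ ≤ ‖x‖)
    (hperm : ∀ w ∈ D, ∀ w' ∈ D, List.Perm w w')
    (μ : Measure E) [μ.IsAddHaarMeasure] (ν : Measure (Fin m → E)) [ν.IsAddHaarMeasure]
    (h1 : 1 < (D.card : ENNReal) * ENNReal.ofReal |(A * A).det|) (R : ℝ) :
    ∃ M : ENNReal, M ≠ ⊤ ∧ ∀ k, ∑ i : Wd D k, ∑ j : Wd D k,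
      ν (closedBall 0 R ∩ (yy L (A * A) D k i - yy L (A * A) D k j) ⁻¹'
        (((A * A) ^ k : E →L[ℝ] E) '' closedBall 0 2)) ≤
        M * ((D.card : ENNReal) ^ 2 * ENNReal.ofReal |(A * A).det|) ^ k := by
  classical
  have : ProperSpace E := FiniteDimensional.proper ℝ E
  set S := A * A with hS
  set s := ENNReal.ofReal |S.det| with hs
  have hδ : 0 < κ * (2 - 2 * ρ / (1 - ρ)) := by
    apply mul_pos hκ
    have : 2 * ρ / (1 - ρ) < 2 := by
      rw [div_lt_iff₀ (by linarith)]; linarith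
    linarith
  have hAinj : ∀ x, A x = 0 → x = 0 := by
    intro x hx
    have := hκA x
    rw [hx, norm_zero] at this
    by_contra hne
    have := mul_pos hκ (norm_pos_iff.2 hne)
    linarith
  have hSinj : Function.Injective S := by
    rw [injective_iff_map_eq_zero]
    intro x hx
    exact hAinj _ (hAinj _ hx)
  obtain ⟨C, hC, hCb⟩ := transv μ ν R _ hδ
  set q := μ (closedBall 0 2) with hq
  refine ennreal_rec _ (D.card : ENNReal) s (C * q) (by simp) (by simp [hs])
    (ENNReal.mul_ne_top hC measure_closedBall_lt_top.ne) h1 ?_ ?_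
  · refine (ENNReal.sum_lt_top.2 fun i _ => ENNReal.sum_lt_top.2 fun j _ => ?_).ne
    exact (measure_mono inter_subset_left).trans_lt measure_closedBall_lt_top
  intro k
  have hWm : MeasurableSet ((S ^ (k + 1) : E →L[ℝ] E) '' closedBall 0 2) :=
    ((isCompact_closedBall _ _).image (S ^ (k + 1)).continuous).measurableSet
  have hμW := measure_pow_image μ S (k + 1) (closedBall 0 2)
  set W := ((S ^ (k + 1) : E →L[ℝ] E) '' closedBall 0 2) with hW
  set g : Wd D k → Wd D k → ENNReal := fun i j =>
    ν (closedBall 0 R ∩ (yy L S D k i - yy L S D k j) ⁻¹'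
        ((S ^ k : E →L[ℝ] E) '' closedBall 0 2)) with hg
  have hterm : ∀ (w : D) (i : Wd D k) (w' : D) (j : Wd D k),
      ν (closedBall 0 R ∩ (yy L S D (k + 1) (w, i) - yy L S D (k + 1) (w', j)) ⁻¹' W) ≤
        (if w = w' then g i j else 0) + C * μ W := by
    intro w i w' j
    by_cases hw : w = w'
    · subst hw
      rw [if_pos rfl]
      refine le_trans (measure_mono ?_) le_self_add
      rintro a ⟨ha, x, hx, hxa⟩
      refine ⟨ha, x, hx, ?_⟩
      apply hSinj
      have : (yy L S D (k + 1) (w, i) - yy L S D (k + 1) (w, j)) a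
          = S ((yy L S D k i - yy L S D k j) a) := by
        simp [yy_succ]
      rw [← this, ← hxa, pow_succ']
      rfl
    · rw [if_neg hw, zero_add]
      obtain ⟨J, hJ1, hJ2⟩ := transv_struct L hρ0 hρ1 hL hc A κ hκ.le hκA D hD hA hperm k w w' hw i j
      exact hCb _ J hJ1 hJ2 W hWm
  have hcard : (Fintype.card (Wd D k) : ENNReal) = (D.card : ENNReal) ^ k := by
    rw [card_Wd]; simp
  rw [sum_Wd_succ k (fun i => ∑ j : Wd D (k + 1),
      ν (closedBall 0 R ∩ (yy L S D (k + 1) i - yy L S D (k + 1) j) ⁻¹' W))]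
  calc _ = ∑ w : D, ∑ i : Wd D k, ∑ w' : D, ∑ j : Wd D k,
        ν (closedBall 0 R ∩ (yy L S D (k + 1) (w, i) - yy L S D (k + 1) (w', j)) ⁻¹' W) := by
        refine Finset.sum_congr rfl fun w _ => Finset.sum_congr rfl fun i _ => ?_
        exact sum_Wd_succ k (fun j =>
          ν (closedBall 0 R ∩ (yy L S D (k + 1) (w, i) - yy L S D (k + 1) j) ⁻¹' W))
    _ ≤ ∑ w : D, ∑ i : Wd D k, ∑ w' : D, ∑ j : Wd D k,
        ((if w = w' then g i j else 0) + C * μ W) := by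
        gcongr with w _ i _ w' _ j _
        exact hterm w i w' j
    _ = D.card * (∑ i : Wd D k, ∑ j : Wd D k, g i j) +
        (D.card : ENNReal) ^ (2 * (k + 1)) * (C * μ W) := by
        simp only [Finset.sum_add_distrib, Finset.sum_const, Finset.card_univ, nsmul_eq_mul, hcard]
        congr 1
        · have : ∀ (w : D) (i : Wd D k), ∑ w' : D, ∑ j : Wd D k, (if w = w' then g i j else 0)
            = ∑ j, g i j := by
            intro w i
            rw [Finset.sum_eq_single w]
            · simp
            · intro b _ hb; simp [hb.symm]
            · simp
          simp_rw [this]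
          simp
        · simp only [Fintype.card_coe]; ring
    _ = _ := by
        rw [hμW]; ring

end counting

section limitset
open Metric Set Filter Topology

variable {E : Type*} [NormedAddCommGroup E] [NormedSpace ℝ E] [CompleteSpace E] {m : ℕ}

/-- coding map of the homogeneous system -/
def ee (L : Fin m → E →L[ℝ] E) (S : E →L[ℝ] E) (D : Finset (List (Fin m))) (a : Fin m → E)
    (ω : ℕ → D) : E := ∑' k, (S ^ k : E →L[ℝ] E) (dg L (ω k).1 a)

theorem ee_bound (L : Fin m → E →L[ℝ] E) (S : E →L[ℝ] E) (D : Finset (List (Fin m)))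
    (a : Fin m → E) (w : D) (k : ℕ) :
    ‖(S ^ k : E →L[ℝ] E) (dg L w.1 a)‖ ≤ ‖S‖ ^ k * ∑ w : D, ‖dg L w.1 a‖ := by
  have h1 : ‖dg L w.1 a‖ ≤ ∑ w : D, ‖dg L w.1 a‖ :=
    Finset.single_le_sum (f := fun w : D => ‖dg L w.1 a‖) (fun _ _ => norm_nonneg _)
      (Finset.mem_univ w)
  have h2 : ∀ x, ‖(S ^ k : E →L[ℝ] E) x‖ ≤ ‖S‖ ^ k * ‖x‖ := by
    induction k with
    | zero => simp
    | succ k ih =>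
      intro x
      rw [pow_succ', pow_succ']
      calc ‖S ((S ^ k : E →L[ℝ] E) x)‖ ≤ ‖S‖ * ‖(S ^ k : E →L[ℝ] E) x‖ := S.le_opNorm _
        _ ≤ ‖S‖ * (‖S‖ ^ k * ‖x‖) := by gcongr; exact ih x
        _ = _ := by ring
  exact (h2 _).trans (by gcongr)

theorem ee_summable_bound (L : Fin m → E →L[ℝ] E) (S : E →L[ℝ] E) (D : Finset (List (Fin m)))
    (a : Fin m → E) (hS : ‖S‖ < 1) :
    Summable (fun k => ‖S‖ ^ k * ∑ w : D, ‖dg L w.1 a‖) :=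
  (summable_geometric_of_lt_one (norm_nonneg _) hS).mul_right _

theorem ee_compact (L : Fin m → E →L[ℝ] E) (S : E →L[ℝ] E) (D : Finset (List (Fin m)))
    (a : Fin m → E) (hS : ‖S‖ < 1) : IsCompact (range (ee L S D a)) := by
  let top : TopologicalSpace (D : Type) := ⊥
  have : DiscreteTopology D := ⟨rfl⟩
  have hcont : Continuous (ee L S D a) := by
    refine continuous_tsum (fun k => ?_) (ee_summable_bound L S D a hS)
      (fun k ω => ee_bound L S D a (ω k) k)
    exact (continuous_of_discreteTopology
      (f := fun w : D => (S ^ k : E →L[ℝ] E) (dg L w.1 a))).comp (continuous_apply k)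
  exact isCompact_range hcont

theorem ee_shift (L : Fin m → E →L[ℝ] E) (S : E →L[ℝ] E) (D : Finset (List (Fin m)))
    (a : Fin m → E) (hS : ‖S‖ < 1) (ω : ℕ → D) :
    ee L S D a ω = dg L (ω 0).1 a + S (ee L S D a (fun k => ω (k + 1))) := by
  have hsum : ∀ ω : ℕ → D, Summable (fun k => (S ^ k : E →L[ℝ] E) (dg L (ω k).1 a)) := fun ω =>
    Summable.of_norm_bounded (ee_summable_bound L S D a hS) (fun k => ee_bound L S D a (ω k) k)
  unfold ee
  rw [(hsum ω).tsum_eq_zero_add, S.map_tsum (hsum _)]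
  simp [pow_succ']

theorem yy_mem (L : Fin m → E →L[ℝ] E) (S : E →L[ℝ] E) (D : Finset (List (Fin m)))
    (a : Fin m → E) (hS : ‖S‖ < 1) (k : ℕ) (i : Wd D k) (x : E) (hx : x ∈ range (ee L S D a)) :
    yy L S D k i a + (S ^ k : E →L[ℝ] E) x ∈ range (ee L S D a) := by
  induction k with
  | zero => simpa [yy] using hx
  | succ k ih =>
    obtain ⟨w, ws⟩ := i
    obtain ⟨ω, hω⟩ := ih ws
    refine ⟨fun n => Nat.casesOn n w ω, ?_⟩
    rw [ee_shift L S D a hS, yy_succ]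
    change dg L w.1 a + S (ee L S D a ω) = _
    rw [hω]
    simp [pow_succ', add_assoc]

theorem sum_subset (L : Fin m → E →L[ℝ] E) (A : E →L[ℝ] E) (D : Finset (List (Fin m)))
    (hD : ∀ w ∈ D, PP L w = A) (a : Fin m → E) (hS : ‖A * A‖ < 1) (K : Set E) (hK : IsClosed K)
    (hK0 : K.Nonempty) (hKs : ∀ i, ∀ x ∈ K, a i + L i x ∈ K) (ω ω' : ℕ → D) :
    ee L (A * A) D a ω + A (ee L (A * A) D a ω') ∈ K := by
  obtain ⟨x0, hx0⟩ := hK0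
  have hword : ∀ (w : List (Fin m)) (x : E), x ∈ K → dg L w a + PP L w x ∈ K := by
    intro w x hx
    induction w with
    | nil => simpa [dg_nil, PP_nil] using hx
    | cons s w ih =>
      have := hKs s _ ih
      rw [dg_cons, PP_cons]
      simpa [add_assoc] using this
  obtain ⟨C0, hC0⟩ := (ee_compact L (A * A) D a hS).isBounded.exists_norm_le
  set C := C0 + ‖A‖ * C0 + ‖x0‖ with hC
  have hb : ∀ ω ω' : ℕ → D, ‖ee L (A * A) D a ω + A (ee L (A * A) D a ω') - x0‖ ≤ C := by
    intro ω ω'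
    have h1 := hC0 _ (mem_range_self ω)
    have h2 := hC0 _ (mem_range_self ω')
    have h3 : ‖A (ee L (A * A) D a ω')‖ ≤ ‖A‖ * C0 :=
      (A.le_opNorm _).trans (by gcongr)
    have h4 := norm_sub_le (ee L (A * A) D a ω + A (ee L (A * A) D a ω')) x0
    have h5 := norm_add_le (ee L (A * A) D a ω) (A (ee L (A * A) D a ω'))
    linarith
  have hk : ∀ (k : ℕ) (ω ω' : ℕ → D), ∃ y ∈ K,
      ‖ee L (A * A) D a ω + A (ee L (A * A) D a ω') - y‖ ≤ ‖A * A‖ ^ k * C := by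
    intro k
    induction k with
    | zero => intro ω ω'; exact ⟨x0, hx0, by simpa using hb ω ω'⟩
    | succ k ih =>
      intro ω ω'
      obtain ⟨y, hy, hyb⟩ := ih (fun k => ω (k + 1)) (fun k => ω' (k + 1))
      refine ⟨_, hword (ω 0).1 _ (hword (ω' 0).1 y hy), ?_⟩
      rw [ee_shift L (A * A) D a hS ω, ee_shift L (A * A) D a hS ω', hD _ (ω 0).2, hD _ (ω' 0).2]
      set e1 := ee L (A * A) D a fun k => ω (k + 1)
      set e2 := ee L (A * A) D a fun k => ω' (k + 1)
      have : dg L (ω 0).1 a + (A * A) e1 + A (dg L (ω' 0).1 a + (A * A) e2) -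
          (dg L (ω 0).1 a + A (dg L (ω' 0).1 a + A y)) = (A * A) (e1 + A e2 - y) := by
        simp only [ContinuousLinearMap.mul_apply', map_add, map_sub]
        abel
      rw [this, pow_succ', mul_assoc]
      exact ((A * A).le_opNorm _).trans (by gcongr)
  rw [← hK.closure_eq, Metric.mem_closure_iff]
  intro ε hε
  have ht : Tendsto (fun k : ℕ => ‖A * A‖ ^ k * C) atTop (𝓝 0) := by
    simpa using (tendsto_pow_atTop_nhds_zero_of_lt_one (norm_nonneg _) hS).mul_const C
  obtain ⟨k, hkε⟩ := (ht.eventually (gt_mem_nhds hε)).exists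
  obtain ⟨y, hy, hyb⟩ := hk k ω ω'
  exact ⟨y, hy, by rw [dist_eq_norm]; exact hyb.trans_lt hkε⟩

end limitset

section positivity
open Metric Set Filter Topology

variable {E : Type*} [NormedAddCommGroup E] [NormedSpace ℝ E] [FiniteDimensional ℝ E]
    [MeasurableSpace E] [BorelSpace E] {m : ℕ}

theorem pow_norm_le (S : E →L[ℝ] E) (k : ℕ) (x : E) : ‖(S ^ k : E →L[ℝ] E) x‖ ≤ ‖S‖ ^ k * ‖x‖ := by
  induction k with
  | zero => simp
  | succ k ih =>
    rw [pow_succ', pow_succ']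
    calc ‖S ((S ^ k : E →L[ℝ] E) x)‖ ≤ ‖S‖ * ‖(S ^ k : E →L[ℝ] E) x‖ := S.le_opNorm _
      _ ≤ ‖S‖ * (‖S‖ ^ k * ‖x‖) := by gcongr
      _ = _ := by ring

theorem cover_tendsto (L : Fin m → E →L[ℝ] E) (S : E →L[ℝ] E) (D : Finset (List (Fin m)))
    (hDne : D.Nonempty) (a : Fin m → E) (hS : ‖S‖ < 1)
    (μ : Measure E) [μ.IsAddHaarMeasure] (h0 : μ (range (ee L S D a)) = 0) :
    Tendsto (fun k => μ (⋃ i : Wd D k, (fun x => yy L S D k i a + x) ''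
      ((S ^ k : E →L[ℝ] E) '' closedBall 0 1))) atTop (𝓝 0) := by
  have : ProperSpace E := FiniteDimensional.proper ℝ E
  have : CompleteSpace E := FiniteDimensional.complete ℝ E
  have hcomp := ee_compact L S D a hS
  obtain ⟨w0, hw0⟩ := hDne
  set e := ee L S D a (fun _ => ⟨w0, hw0⟩) with he
  have hemem : e ∈ range (ee L S D a) := mem_range_self _
  have ht1 := tendsto_measure_cthickening_of_isCompact (μ := μ) hcomp
  rw [h0] at ht1
  have ht2 : Tendsto (fun k : ℕ => ‖S‖ ^ k * (1 + ‖e‖)) atTop (𝓝 0) := by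
    simpa using (tendsto_pow_atTop_nhds_zero_of_lt_one (norm_nonneg _) hS).mul_const (1 + ‖e‖)
  refine tendsto_of_tendsto_of_tendsto_of_le_of_le tendsto_const_nhds (ht1.comp ht2)
    (fun _ => zero_le) (fun k => measure_mono ?_)
  intro z hz
  obtain ⟨i, hi⟩ := mem_iUnion.1 hz
  obtain ⟨_, ⟨q, hq, rfl⟩, rfl⟩ := hi
  refine mem_cthickening_of_dist_le _ (yy L S D k i a + (S ^ k : E →L[ℝ] E) e) _ _
    (yy_mem L S D a hS k i e hemem) ?_
  rw [dist_eq_norm]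
  have : yy L S D k i a + (S ^ k : E →L[ℝ] E) q - (yy L S D k i a + (S ^ k : E →L[ℝ] E) e)
      = (S ^ k : E →L[ℝ] E) (q - e) := by
    rw [map_sub]; abel
  rw [this]
  refine (pow_norm_le S k _).trans ?_
  have hq1 : ‖q‖ ≤ 1 := by simpa using hq
  have hq2 : ‖q - e‖ ≤ 1 + ‖e‖ := (norm_sub_le _ _).trans (by linarith)
  exact mul_le_mul_of_nonneg_left hq2 (by positivity)

theorem ae_pos [BorelSpace (Fin m → E)] (L : Fin m → E →L[ℝ] E) (S : E →L[ℝ] E)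
    (D : Finset (List (Fin m))) (hDne : D.Nonempty) (hS : ‖S‖ < 1)
    (μ : Measure E) [μ.IsAddHaarMeasure] (ν : Measure (Fin m → E)) [ν.IsAddHaarMeasure]
    (hdet : S.det ≠ 0) (R : ℝ) (M : ENNReal) (hM : M ≠ ⊤)
    (hMb : ∀ k, ∑ i : Wd D k, ∑ j : Wd D k,
      ν (closedBall 0 R ∩ (yy L S D k i - yy L S D k j) ⁻¹'
        ((S ^ k : E →L[ℝ] E) '' closedBall 0 2)) ≤
        M * ((D.card : ENNReal) ^ 2 * ENNReal.ofReal |S.det|) ^ k) :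
    ∀ᵐ a ∂ν, a ∈ closedBall (0 : Fin m → E) R → μ (range (ee L S D a)) ≠ 0 := by
  have : ProperSpace E := FiniteDimensional.proper ℝ E
  set s := ENNReal.ofReal |S.det| with hs
  have hs0 : s ≠ 0 := by simpa [hs] using hdet
  have hst : s ≠ ⊤ := by simp [hs]
  set N : ENNReal := (D.card : ENNReal) with hN
  have hN0 : N ≠ 0 := by simpa [hN] using hDne.ne_empty
  have hNt : N ≠ ⊤ := by simp [hN]
  set x := N ^ 2 * s with hx
  have hx0 : x ≠ 0 := mul_ne_zero (pow_ne_zero _ hN0) hs0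
  have hxt : x ≠ ⊤ := ENNReal.mul_ne_top (ENNReal.pow_ne_top hNt) hst
  set Tt : (k : ℕ) → Wd D k → Wd D k → Set (Fin m → E) := fun k i j =>
    closedBall 0 R ∩ (yy L S D k i - yy L S D k j) ⁻¹'
        ((S ^ k : E →L[ℝ] E) '' closedBall 0 2) with hT
  have hTm : ∀ k i j, MeasurableSet (Tt k i j) := fun k i j =>
    measurableSet_closedBall.inter ((yy L S D k i - yy L S D k j).continuous.measurable
      ((isCompact_closedBall _ _).image (S ^ k).continuous).measurableSet)
  set h : ℕ → (Fin m → E) → ENNReal := fun k a =>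
    (∑ i : Wd D k, ∑ j : Wd D k, (Tt k i j).indicator (fun _ => 1) a) * (x ^ k)⁻¹ with hh
  have hsm : ∀ k, Measurable (fun a => ∑ i : Wd D k, ∑ j : Wd D k,
      (Tt k i j).indicator (fun _ => (1 : ENNReal)) a) := fun k =>
    Finset.measurable_sum _ fun i _ => Finset.measurable_sum _ fun j _ =>
      measurable_const.indicator (hTm k i j)
  have hhm : ∀ k, Measurable (h k) := fun k => (hsm k).mul_const _
  have hintM : ∀ k, ∫⁻ a, h k a ∂ν ≤ M := by
    intro k
    rw [lintegral_mul_const _ (hsm k), lintegral_finsetSum _ fun i _ =>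
      Finset.measurable_sum _ fun j _ => measurable_const.indicator (hTm k i j)]
    have : ∀ i : Wd D k, ∫⁻ a, ∑ j : Wd D k, (Tt k i j).indicator (fun _ => (1 : ENNReal)) a ∂ν
        = ∑ j : Wd D k, ν (Tt k i j) := by
      intro i
      rw [lintegral_finsetSum _ fun j _ => measurable_const.indicator (hTm k i j)]
      refine Finset.sum_congr rfl fun j _ => ?_
      rw [lintegral_indicator_const (hTm k i j), one_mul]
    simp_rw [this]
    calc _ ≤ M * x ^ k * (x ^ k)⁻¹ := by gcongr; exact hMb k
      _ = M := by
        rw [mul_assoc, ENNReal.mul_inv_cancel (pow_ne_zero _ hx0) (ENNReal.pow_ne_top hxt), mul_one]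
  have hfatou : ∫⁻ a, liminf (fun k => h k a) atTop ∂ν ≠ ⊤ := by
    refine ne_top_of_le_ne_top hM ((lintegral_liminf_le hhm).trans ?_)
    refine liminf_le_of_frequently_le' (Frequently.of_forall hintM)
  have hae := ae_lt_top (Measurable.liminf hhm) hfatou
  filter_upwards [hae] with a ha haR h0
  obtain ⟨c, hc1, hc2⟩ := exists_between ha
  have hfreq := frequently_lt_of_liminf_lt (by isBoundedDefault) hc1
  have htend := cover_tendsto L S D hDne a hS μ h0
  set b := μ (closedBall (0 : E) 1) with hb
  have hb0 : b ≠ 0 := (measure_closedBall_pos μ _ one_pos).ne'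
  have hbt : b ≠ ⊤ := measure_closedBall_lt_top.ne
  have htend2 := ENNReal.Tendsto.mul_const htend (Or.inr hc2.ne : (0 : ENNReal) ≠ 0 ∨ c ≠ ⊤)
  rw [zero_mul] at htend2
  have hev := htend2.eventually (gt_mem_nhds (pos_iff_ne_zero.2 hb0))
  obtain ⟨k, hk1, hk2⟩ := (hfreq.and_eventually hev).exists
  set B : Wd D k → Set E := fun i => (fun x => yy L S D k i a + x) ''
      ((S ^ k : E →L[ℝ] E) '' closedBall 0 1) with hB
  have hBm : ∀ i, MeasurableSet (B i) := fun i =>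
    (((isCompact_closedBall _ _).image (S ^ k).continuous).image (by fun_prop)).measurableSet
  have hBμ : ∀ i, μ (B i) = s ^ k * b := by
    intro i
    rw [hB]
    simp only [image_add_left, measure_preimage_add]
    exact measure_pow_image μ S k _
  have hcs := cs_cover μ B hBm
  have hinter : ∀ i j, μ (B i ∩ B j) ≤ (Tt k i j).indicator (fun _ => 1) a * (s ^ k * b) := by
    intro i j
    by_cases hij : a ∈ Tt k i j
    · rw [indicator_of_mem hij, one_mul, ← hBμ i]
      exact measure_mono inter_subset_left
    · have : B i ∩ B j = ∅ := by
        rw [eq_empty_iff_forall_notMem]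
        rintro z ⟨⟨_, ⟨q, hq, rfl⟩, hz⟩, ⟨_, ⟨q', hq', rfl⟩, hz'⟩⟩
        apply hij
        refine ⟨haR, q' - q, ?_, ?_⟩
        · simp only [mem_closedBall, dist_zero_right] at hq hq' ⊢
          have := norm_sub_le q' q
          linarith
        · rw [map_sub, sub_apply, sub_eq_sub_iff_add_eq_add, add_comm _ (yy L S D k j a)]
          exact hz'.trans hz.symm
      rw [this, measure_empty]; exact zero_le
  have hcard : (Fintype.card (Wd D k) : ENNReal) = N ^ k := by
    rw [card_Wd]; simp [hN]
  have hlhs : ∑ i, μ (B i) = N ^ k * (s ^ k * b) := by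
    simp only [hBμ, Finset.sum_const, Finset.card_univ, nsmul_eq_mul, hcard]
  have hrhs : ∑ i, ∑ j, μ (B i ∩ B j) ≤ h k a * x ^ k * (s ^ k * b) := by
    calc _ ≤ ∑ i, ∑ j, (Tt k i j).indicator (fun _ => 1) a * (s ^ k * b) := by
          gcongr with i _ j _
          exact hinter i j
      _ = (∑ i : Wd D k, ∑ j : Wd D k, (Tt k i j).indicator (fun _ => 1) a) * (s ^ k * b) := by
          simp_rw [Finset.sum_mul]
      _ = _ := by
          rw [hh]
          simp only
          rw [mul_assoc (∑ i : Wd D k, _), ENNReal.inv_mul_cancel (pow_ne_zero _ hx0)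
            (ENNReal.pow_ne_top hxt), mul_one]
  rw [hlhs] at hcs
  have hfin : x ^ k * (s ^ k * b) * b ≤ x ^ k * (s ^ k * b) * (μ (⋃ i, B i) * c) := by
    calc x ^ k * (s ^ k * b) * b = (N ^ k * (s ^ k * b)) ^ 2 := by rw [hx]; ring
      _ ≤ _ := hcs
      _ ≤ μ (⋃ i, B i) * (c * x ^ k * (s ^ k * b)) := by
          gcongr
          refine hrhs.trans ?_
          gcongr
      _ = _ := by ring
  have hne : x ^ k * (s ^ k * b) ≠ 0 :=
    mul_ne_zero (pow_ne_zero _ hx0) (mul_ne_zero (pow_ne_zero _ hs0) hb0)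
  have hnt : x ^ k * (s ^ k * b) ≠ ⊤ :=
    ENNReal.mul_ne_top (ENNReal.pow_ne_top hxt) (ENNReal.mul_ne_top (ENNReal.pow_ne_top hst) hbt)
  have := (ENNReal.mul_le_mul_iff_right hne hnt).1 hfin
  exact absurd hk2 (not_lt.2 this)

end positivity

section coding
open Set Filter Topology

theorem coding_eq {d m : ℕ} (T : Fin m → Matrix (Fin d) (Fin d) ℝ) {n : ℕ} (I : Fin n → Fin m) :
    Matrix.toEuclideanCLM (𝕜 := ℝ) (wordProd T I) =
      PP (fun i => Matrix.toEuclideanCLM (𝕜 := ℝ) (T i)) (List.ofFn I) := by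
  unfold wordProd PP
  rw [map_list_prod, List.map_ofFn, List.map_ofFn]
  rfl

theorem PP_norm_pow {E : Type*} [NormedAddCommGroup E] [NormedSpace ℝ E] {m : ℕ}
    (L : Fin m → E →L[ℝ] E) {ρ : ℝ} (hρ0 : 0 ≤ ρ) (hL : ∀ i, ‖L i‖ ≤ ρ) (w : List (Fin m)) (x : E) :
    ‖PP L w x‖ ≤ ρ ^ w.length * ‖x‖ := by
  induction w with
  | nil => simp [PP_nil]
  | cons s w ih =>
    rw [PP_cons]
    calc ‖L s (PP L w x)‖ ≤ ‖L s‖ * ‖PP L w x‖ := (L s).le_opNorm _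
      _ ≤ ρ * (ρ ^ w.length * ‖x‖) := mul_le_mul (hL s) ih (norm_nonneg _) hρ0
      _ = _ := by rw [List.length_cons, pow_succ']; ring

/-- abstract coding map -/
def cod {E : Type*} [NormedAddCommGroup E] [NormedSpace ℝ E] {m : ℕ}
    (L : Fin m → E →L[ℝ] E) (a : Fin m → E) (x : ℕ → Fin m) : E :=
  ∑' n : ℕ, PP L (List.ofFn fun k : Fin n => x (k : ℕ)) (a (x n))

theorem cod_props {E : Type*} [NormedAddCommGroup E] [NormedSpace ℝ E] [CompleteSpace E] {m : ℕ}
    (L : Fin m → E →L[ℝ] E) (a : Fin m → E) {ρ : ℝ} (hρ0 : 0 ≤ ρ)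
    (hρ1 : ρ < 1) (hL : ∀ i, ‖L i‖ ≤ ρ) :
    IsClosed (range (cod L a)) ∧ ∀ i, ∀ x ∈ range (cod L a), a i + L i x ∈ range (cod L a) := by
  have hbd : ∀ (n : ℕ) (x : ℕ → Fin m),
      ‖PP L (List.ofFn fun k : Fin n => x (k : ℕ)) (a (x n))‖ ≤ ρ ^ n * ‖a‖ := by
    intro n x
    refine (PP_norm_pow _ hρ0 hL _ _).trans ?_
    rw [List.length_ofFn]
    gcongr
    exact norm_le_pi_norm a _
  have hsb : Summable (fun n : ℕ => ρ ^ n * ‖a‖) :=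
    (summable_geometric_of_lt_one hρ0 hρ1).mul_right _
  have hsum : ∀ x : ℕ → Fin m, Summable (fun n : ℕ =>
      PP L (List.ofFn fun k : Fin n => x (k : ℕ)) (a (x n))) :=
    fun x => Summable.of_norm_bounded hsb (fun n => hbd n x)
  constructor
  · have hcont : Continuous (cod L a) := by
      refine continuous_tsum (fun n => ?_) hsb hbd
      have hr : Continuous (fun x : ℕ → Fin m => ((fun k : Fin n => x (k : ℕ)), x n)) := by fun_prop
      have hg : Continuous (fun p : (Fin n → Fin m) × Fin m =>
        PP L (List.ofFn p.1) (a p.2)) :=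
        continuous_of_discreteTopology
      exact hg.comp hr
    exact (isCompact_range hcont).isClosed
  · rintro i _ ⟨x, rfl⟩
    refine ⟨fun n => Nat.casesOn n i x, ?_⟩
    rw [cod, (hsum _).tsum_eq_zero_add, cod, ContinuousLinearMap.map_tsum _ (hsum x)]
    congr 1
    congr 1
    ext1 n
    rw [List.ofFn_succ, PP_cons]
    rfl

theorem attractor_props {d m : ℕ} (T : Fin m → Matrix (Fin d) (Fin d) ℝ) {ρ : ℝ} (hρ0 : 0 ≤ ρ)
    (hρ1 : ρ < 1) (hL : ∀ i, ‖Matrix.toEuclideanCLM (𝕜 := ℝ) (T i)‖ ≤ ρ)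
    (a : Fin m → EuclideanSpace ℝ (Fin d)) :
    IsClosed (attractor T a) ∧ ∀ i, ∀ x ∈ attractor T a,
      a i + Matrix.toEuclideanCLM (𝕜 := ℝ) (T i) x ∈ attractor T a := by
  have h : attractor T a = range (cod (fun i => Matrix.toEuclideanCLM (𝕜 := ℝ) (T i)) a) := by
    unfold attractor
    congr 1
    funext x
    unfold codingMap cod
    simp_rw [coding_eq]
  rw [h]
  exact cod_props _ a hρ0 hρ1 hL

theorem det_CLM {d : ℕ} (A : Matrix (Fin d) (Fin d) ℝ) :
    (Matrix.toEuclideanCLM (𝕜 := ℝ) A).det = A.det := by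
  unfold ContinuousLinearMap.det
  rw [Matrix.coe_toEuclideanCLM_eq_toEuclideanLin, Matrix.toEuclideanLin_eq_toLin]
  exact LinearMap.det_toLin _ _

theorem clm_det_mul {E : Type*} [NormedAddCommGroup E] [NormedSpace ℝ E] (A B : E →L[ℝ] E) :
    (A * B).det = A.det * B.det := by
  unfold ContinuousLinearMap.det
  rw [← map_mul]
  rfl

end coding

/-- **Theorem 1.3.** If `‖T_i‖ < 1/2` for all `i`, the matrices `T_i` pairwise commute,
and `∑_i |det T_i|² > 1`, then for Lebesgue-a.e. `a ∈ ℝ^{md}` the self-affine set `K^a`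
has non-empty interior. -/
theorem typical_selfAffine_nonempty_interior_of_commute
    (T : Fin m → Matrix (Fin d) (Fin d) ℝ)
    (hinv : ∀ i, IsUnit (T i).det)
    (hnorm : ∀ i, opNorm (T i) < 1 / 2)
    (hcomm : ∀ i j, T i * T j = T j * T i)
    (hsum : 1 < ∑ i : Fin m, |(T i).det| ^ 2) :
    ∀ᵐ a ∂(volume : Measure (Fin m → EuclideanSpace ℝ (Fin d))),
      (interior (attractor T a)).Nonempty := by
  set L : Fin m → EuclideanSpace ℝ (Fin d) →L[ℝ] EuclideanSpace ℝ (Fin d) :=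
    fun i => Matrix.toEuclideanCLM (𝕜 := ℝ) (T i) with hLdef
  obtain ⟨ρ, hρ0, hρ1, hL⟩ : ∃ ρ : ℝ, 0 ≤ ρ ∧ ρ < 1 / 2 ∧ ∀ i, ‖L i‖ ≤ ρ := by
    refine ⟨((Finset.univ.sup (fun i => ‖L i‖₊) : NNReal) : ℝ), NNReal.coe_nonneg _, ?_, ?_⟩
    · have : Finset.univ.sup (fun i => ‖L i‖₊) < (1 / 2 : NNReal) := by
        rw [Finset.sup_lt_iff (by simp)]
        intro i _
        rw [← NNReal.coe_lt_coe]
        have hi : ‖L i‖ < 1 / 2 := hnorm i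
        simpa using hi
      have h2 := NNReal.coe_lt_coe.2 this
      simpa using h2
    · intro i
      have : ‖L i‖₊ ≤ Finset.univ.sup (fun i => ‖L i‖₊) :=
        Finset.le_sup (f := fun i => ‖L i‖₊) (Finset.mem_univ i)
      exact_mod_cast this
  have hρ : ρ < 1 := by linarith
  have hc : ∀ i j, L i * L j = L j * L i := by
    intro i j
    simp only [hLdef]
    rw [← map_mul, hcomm, map_mul]
  obtain ⟨D, hDne, hperm, hDsum⟩ := exists_type (fun i => |(T i).det| ^ 2) hsum
  have hDn : D.Nonempty := by
    rw [Finset.nonempty_iff_ne_empty]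
    rintro rfl
    simp at hDsum
    linarith
  obtain ⟨w0, hw0⟩ := hDn
  set A := PP L w0 with hAdef
  have hD : ∀ w ∈ D, PP L w = A := fun w hw => PP_perm L hc (hperm w hw w0 hw0)
  have hAnorm : ∀ x, ‖A x‖ ≤ ‖x‖ := PP_norm L hρ0 hρ.le hL w0
  have hA1 : ‖A‖ ≤ ρ := PP_norm_lt L hρ0 hρ.le hL w0 (hDne w0 hw0)
  have hS : ‖A * A‖ < 1 := by
    have h1 := norm_mul_le A A
    have h2 : ‖A‖ * ‖A‖ ≤ ρ * ρ := mul_le_mul hA1 hA1 (norm_nonneg _) hρ0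
    nlinarith
  have hdetw : ∀ w : List (Fin m), (w.map (fun i => |(T i).det| ^ 2)).prod = |(PP L w).det| ^ 2 := by
    intro w
    induction w with
    | nil =>
      have : (PP L []).det = 1 := by
        rw [PP_nil]; unfold ContinuousLinearMap.det; exact LinearMap.det_id
      simp [this]
    | cons s w ih =>
      rw [List.map_cons, List.prod_cons, ih, PP_cons, clm_det_mul, abs_mul, mul_pow]
      simp only [hLdef]
      rw [det_CLM]
  have hmain : 1 < (D.card : ℝ) * |(A * A).det| := by
    have : ∑ w ∈ D, (w.map (fun i => |(T i).det| ^ 2)).prod = (D.card : ℝ) * |(A * A).det| := by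
      rw [Finset.sum_congr rfl (g := fun _ => |(A * A).det|)]
      · simp
      · intro w hw
        rw [hdetw, hD w hw, clm_det_mul, abs_mul, pow_two]
    rwa [this] at hDsum
  have hdetS : (A * A).det ≠ 0 := by
    intro h
    rw [h] at hmain
    simp at hmain
    linarith
  have hdetA : A.det ≠ 0 := by
    intro h
    apply hdetS
    rw [clm_det_mul, h, zero_mul]
  obtain ⟨κ, hκ, hκA⟩ : ∃ κ : ℝ, 0 < κ ∧ ∀ x, κ * ‖x‖ ≤ ‖A x‖ := by
    have hker : LinearMap.ker (A : EuclideanSpace ℝ (Fin d) →ₗ[ℝ] EuclideanSpace ℝ (Fin d)) = ⊥ := by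
      by_contra hne
      apply hdetA
      unfold ContinuousLinearMap.det
      by_contra h0
      exact hne (LinearMap.ker_eq_bot.2
        ((LinearMap.equivOfDetNeZero _ h0).injective))
    obtain ⟨K, hK, hanti⟩ := LinearMap.exists_antilipschitzWith _ hker
    refine ⟨(K : ℝ)⁻¹, by positivity, fun x => ?_⟩
    have := hanti.le_mul_dist x 0
    simp only [dist_zero_right, map_zero] at this
    have hK' : (0 : ℝ) < K := hK
    rw [inv_mul_le_iff₀ hK']
    exact this
  have h1 : 1 < (D.card : ENNReal) * ENNReal.ofReal |(A * A).det| := by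
    have : (D.card : ENNReal) = ENNReal.ofReal (D.card : ℝ) := by simp
    rw [this, ← ENNReal.ofReal_mul (by positivity), ← ENNReal.ofReal_one]
    exact (ENNReal.ofReal_lt_ofReal_iff (by linarith)).2 hmain
  have hae : ∀ n : ℕ, ∀ᵐ a ∂(volume : Measure (Fin m → EuclideanSpace ℝ (Fin d))),
      a ∈ Metric.closedBall (0 : Fin m → EuclideanSpace ℝ (Fin d)) (n : ℝ) →
        (volume : Measure (EuclideanSpace ℝ (Fin d))) (Set.range (ee L (A * A) D a)) ≠ 0 := by
    intro n
    obtain ⟨M, hM, hMb⟩ := counting L hρ0 hρ1 hL hc A κ hκ hκA D hD hAnorm hperm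
      (volume : Measure (EuclideanSpace ℝ (Fin d)))
      (volume : Measure (Fin m → EuclideanSpace ℝ (Fin d))) h1 (n : ℝ)
    exact ae_pos L (A * A) D ⟨w0, hw0⟩ hS _ _ hdetS _ M hM hMb
  filter_upwards [ae_all_iff.2 hae] with a ha
  obtain ⟨n, hn⟩ := exists_nat_ge ‖a‖
  have hpos := ha n (by simpa using hn)
  have hcomp := ee_compact L (A * A) D a hS
  have hcompA := hcomp.image A.continuous
  have hposA : (volume : Measure (EuclideanSpace ℝ (Fin d))) (A '' Set.range (ee L (A * A) D a)) ≠ 0 := by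
    have := measure_pow_image (volume : Measure (EuclideanSpace ℝ (Fin d))) A 1
      (Set.range (ee L (A * A) D a))
    rw [pow_one, pow_one] at this
    rw [this]
    exact mul_ne_zero (by simpa using hdetA) hpos
  obtain ⟨x, U, hU, hUb⟩ := steinhaus_add volume _ _ hcomp.measurableSet hcompA.measurableSet hpos hposA
  obtain ⟨hKc, hKs⟩ := attractor_props T hρ0 hρ hL a
  have hKne : (attractor T a).Nonempty := by
    cases w0 with
    | nil => exact absurd rfl (hDne _ hw0)
    | cons s w => exact ⟨_, fun _ => s, rfl⟩
  refine ⟨x, mem_interior_iff_mem_nhds.2 (Filter.mem_of_superset hU ?_)⟩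
  intro y hy
  obtain ⟨_, ⟨ω, rfl⟩, _, ⟨_, ⟨ω', rfl⟩, rfl⟩, rfl⟩ := hUb y hy
  exact sum_subset L A D hD a hS _ hKc hKne hKs ω ω'

end SelfAffine
end
end

section
/- Assume δ := max_{1≤i≤m} ‖T_i‖ < 1/2. Then for all a ∈ ℝ^{md}, all x = (x_k), y = (y_k) ∈ Σ with x_1 ≠ y_1, and all unit vectors v ∈ ℝ^d, the gradient with respect to a of the function a ↦ ⟨v, π^a(x) − π^a(y)⟩ (a linear function of a ∈ ℝ^{md}) has Euclidean norm at least (1 − 2δ)/(1 − δ). -/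
open MeasureTheory

noncomputable section

namespace SelfAffine

variable {d m : ℕ}

lemma aux_mul_le {E : Type*} [NormedAddCommGroup E] [NormedSpace ℝ E] (A B : E →L[ℝ] E)
    (p q : ℝ) (hp : 0 ≤ p) (hA : ‖A‖ ≤ p) (hB : ‖B‖ ≤ q) : ‖A * B‖ ≤ p * q :=
  (norm_mul_le A B).trans (mul_le_mul hA hB (norm_nonneg _) hp)

lemma aux_summable {E F : Type*} [NormedAddCommGroup E] [NormedSpace ℝ E]
    [NormedAddCommGroup F] [NormedSpace ℝ F] [CompleteSpace F] (c : ℕ → E →L[ℝ] F)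
    (δ : ℝ) (hδ0 : 0 ≤ δ) (hδ1 : δ < 1) (h : ∀ n b, ‖c n b‖ ≤ δ ^ n * ‖b‖) : Summable c :=
  Summable.of_norm_bounded (summable_geometric_of_lt_one hδ0 hδ1) fun n =>
    ContinuousLinearMap.opNorm_le_bound _ (pow_nonneg hδ0 n) (h n)

open RealInnerProductSpace in
lemma aux_gradient {E F : Type*} [NormedAddCommGroup E] [InnerProductSpace ℝ E] [CompleteSpace E]
    [NormedAddCommGroup F] [InnerProductSpace ℝ F] (X Y : E →L[ℝ] F) (v : F) (hv : ‖v‖ = 1)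
    (a b : E) (hbn : ‖b‖ ≤ 2) (r : ℝ) (h1 : ‖X b - v‖ ≤ r) (h2 : ‖Y b - -v‖ ≤ r) :
    1 - r ≤ ‖gradient (fun b : E => ⟪v, X b - Y b⟫) a‖ := by
  have hf : (fun b : E => ⟪v, X b - Y b⟫) = ((innerSL ℝ v).comp (X - Y)) := by
    funext b
    rfl
  rw [hf, gradient, ContinuousLinearMap.fderiv, LinearIsometryEquiv.norm_map]
  have j1 := abs_real_inner_le_norm v (X b - v)
  rw [hv, one_mul] at j1
  have i1 := abs_le.1 (j1.trans h1)
  have j2 := abs_real_inner_le_norm v (Y b - -v)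
  rw [hv, one_mul] at j2
  have i2 := abs_le.1 (j2.trans h2)
  simp only [inner_sub_right, inner_neg_right, real_inner_self_eq_norm_sq, hv] at i1 i2
  have hL := (le_abs_self _).trans (((innerSL ℝ v).comp (X - Y)).le_opNorm b)
  have hE : ((innerSL ℝ v).comp (X - Y)) b = ⟪v, X b⟫ - ⟪v, Y b⟫ := by
    simp [inner_sub_right]
  rw [hE] at hL
  have := mul_le_mul_of_nonneg_left hbn (norm_nonneg ((innerSL ℝ v).comp (X - Y)))
  linarith [i1.1, i2.2]

lemma opNorm_wordProd_le (T : Fin m → Matrix (Fin d) (Fin d) ℝ) (δ : ℝ) (hδ0 : 0 ≤ δ)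
    (hδ : ∀ i, opNorm (T i) ≤ δ) (x : ℕ → Fin m) (n : ℕ) :
    ‖Matrix.toEuclideanCLM (𝕜 := ℝ) (wordProd T fun k : Fin n => x (k : ℕ))‖ ≤ δ ^ n := by
  induction n generalizing x with
  | zero =>
    simp only [wordProd, List.ofFn_zero, List.prod_nil, map_one, pow_zero]
    exact ContinuousLinearMap.norm_id_le
  | succ n ih =>
    have h : (wordProd T fun k : Fin (n + 1) => x (k : ℕ)) =
        T (x 0) * wordProd T fun k : Fin n => (fun j => x (j + 1)) (k : ℕ) := by
      simp [wordProd, List.ofFn_succ]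
    rw [h, map_mul, pow_succ']
    exact aux_mul_le _ _ _ _ hδ0 (hδ _) (ih fun j => x (j + 1))

/-- The `n`-th term of the coding map, as a continuous linear map in `a`. -/
def codingTerm (T : Fin m → Matrix (Fin d) (Fin d) ℝ) (x : ℕ → Fin m) (n : ℕ) :
    (PiLp 2 fun _ : Fin m => EuclideanSpace ℝ (Fin d)) →L[ℝ] EuclideanSpace ℝ (Fin d) :=
  (Matrix.toEuclideanCLM (𝕜 := ℝ) (wordProd T fun k : Fin n => x (k : ℕ))).comp
    (PiLp.proj 2 (fun _ : Fin m => EuclideanSpace ℝ (Fin d)) (x n))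

lemma codingTerm_apply (T : Fin m → Matrix (Fin d) (Fin d) ℝ) (x : ℕ → Fin m) (n : ℕ)
    (b : PiLp 2 fun _ : Fin m => EuclideanSpace ℝ (Fin d)) :
    codingTerm T x n b =
      Matrix.toEuclideanCLM (𝕜 := ℝ) (wordProd T fun k : Fin n => x (k : ℕ)) (b (x n)) := rfl

lemma codingTerm_le (T : Fin m → Matrix (Fin d) (Fin d) ℝ) (δ : ℝ) (hδ0 : 0 ≤ δ)
    (hδ : ∀ i, opNorm (T i) ≤ δ) (x : ℕ → Fin m) (n : ℕ)
    (b : PiLp 2 fun _ : Fin m => EuclideanSpace ℝ (Fin d)) :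
    ‖codingTerm T x n b‖ ≤ δ ^ n * ‖b (x n)‖ := by
  rw [codingTerm_apply]
  exact ContinuousLinearMap.le_of_opNorm_le _ (opNorm_wordProd_le T δ hδ0 hδ x n) _

lemma codingTerm_summable (T : Fin m → Matrix (Fin d) (Fin d) ℝ) (δ : ℝ) (hδ0 : 0 ≤ δ)
    (hδ1 : δ < 1) (hδ : ∀ i, opNorm (T i) ≤ δ) (x : ℕ → Fin m) :
    Summable (codingTerm T x) := by
  refine aux_summable _ δ hδ0 hδ1 fun n b => ?_
  exact (codingTerm_le T δ hδ0 hδ x n b).trans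
    (mul_le_mul_of_nonneg_left (PiLp.norm_apply_le b (x n)) (pow_nonneg hδ0 n))

lemma codingMap_hasSum (T : Fin m → Matrix (Fin d) (Fin d) ℝ) (δ : ℝ) (hδ0 : 0 ≤ δ)
    (hδ1 : δ < 1) (hδ : ∀ i, opNorm (T i) ≤ δ) (x : ℕ → Fin m)
    (b : PiLp 2 fun _ : Fin m => EuclideanSpace ℝ (Fin d)) :
    HasSum (fun n => codingTerm T x n b) ((∑' n, codingTerm T x n) b) :=
  (codingTerm_summable T δ hδ0 hδ1 hδ x).hasSum.mapL (ContinuousLinearMap.apply ℝ _ b)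

lemma codingMap_eq (T : Fin m → Matrix (Fin d) (Fin d) ℝ) (δ : ℝ) (hδ0 : 0 ≤ δ)
    (hδ1 : δ < 1) (hδ : ∀ i, opNorm (T i) ≤ δ) (x : ℕ → Fin m)
    (b : PiLp 2 fun _ : Fin m => EuclideanSpace ℝ (Fin d)) :
    codingMap T b x = (∑' n, codingTerm T x n) b :=
  (codingMap_hasSum T δ hδ0 hδ1 hδ x b).tsum_eq

lemma exists_direction {F : Type*} [NormedAddCommGroup F] (p q : Fin m) (hpq : p ≠ q)
    (v : F) (hv : ‖v‖ = 1) : ∃ b : PiLp 2 fun _ : Fin m => F,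
      ‖b‖ ≤ 2 ∧ b p = v ∧ b q = -v ∧ ∀ i, ‖b i‖ ≤ 1 := by
  have hbx : (PiLp.single 2 p v - PiLp.single 2 q v : PiLp 2 fun _ : Fin m => F) p = v := by
    simp [hpq]
  have hby : (PiLp.single 2 p v - PiLp.single 2 q v : PiLp 2 fun _ : Fin m => F) q = -v := by
    simp [hpq.symm]
  refine ⟨PiLp.single 2 p v - PiLp.single 2 q v, ?_, hbx, hby, ?_⟩
  · refine (norm_sub_le _ _).trans ?_
    rw [PiLp.norm_single, PiLp.norm_single, hv]
    norm_num
  · intro i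
    by_cases h1 : i = p
    · rw [h1, hbx, hv]
    · by_cases h2 : i = q
      · rw [h2, hby, norm_neg, hv]
      · simp [h1, h2]

lemma codingMap_sub_le (T : Fin m → Matrix (Fin d) (Fin d) ℝ) (δ : ℝ) (hδ0 : 0 ≤ δ)
    (hδ1 : δ < 1) (hδ : ∀ i, opNorm (T i) ≤ δ) (x : ℕ → Fin m)
    (b : PiLp 2 fun _ : Fin m => EuclideanSpace ℝ (Fin d)) (hb : ∀ i, ‖b i‖ ≤ 1) :
    ‖(∑' n, codingTerm T x n) b - b (x 0)‖ ≤ δ / (1 - δ) := by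
  have h := codingMap_hasSum T δ hδ0 hδ1 hδ x b
  have h0 : codingTerm T x 0 b = b (x 0) := by
    simp [codingTerm, wordProd]
  have h1 := (hasSum_nat_add_iff' 1).2 h
  simp only [Finset.range_one, Finset.sum_singleton, h0] at h1
  have hg : HasSum (fun n : ℕ => δ * δ ^ n) (δ / (1 - δ)) := by
    rw [div_eq_mul_inv]
    exact (hasSum_geometric_of_lt_one hδ0 hδ1).mul_left δ
  rw [← h1.tsum_eq]
  refine tsum_of_norm_bounded hg fun n => ?_
  rw [← pow_succ']
  exact (codingTerm_le T δ hδ0 hδ x (n + 1) b).trans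
    (mul_le_of_le_one_right (pow_nonneg hδ0 _) (hb _))

open RealInnerProductSpace in
/-- **Lemma 3.2.** If `δ := max_i ‖T_i‖ < 1/2`, then for every `a ∈ ℝ^{md}`, every
`x, y ∈ Σ` with `x_1 ≠ y_1` and every unit vector `v ∈ ℝ^d`, the gradient (in `a`) of
the linear function `a ↦ ⟨v, π^a(x) − π^a(y)⟩` has norm at least `(1 − 2δ)/(1 − δ)`.
Here `ℝ^{md}` carries its Euclidean (inner product) structure, as
`PiLp 2 (fun _ : Fin m => EuclideanSpace ℝ (Fin d))`. -/
theorem gradient_inner_codingMap_sub_ge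
    (T : Fin m → Matrix (Fin d) (Fin d) ℝ)
    (hinv : ∀ i, IsUnit (T i).det)
    (δ : ℝ) (hδ : ∀ i, opNorm (T i) ≤ δ) (hδ' : δ < 1 / 2)
    (a : PiLp 2 fun _ : Fin m => EuclideanSpace ℝ (Fin d))
    (x y : ℕ → Fin m) (hxy : x 0 ≠ y 0)
    (v : EuclideanSpace ℝ (Fin d)) (hv : ‖v‖ = 1) :
    (1 - 2 * δ) / (1 - δ) ≤
      ‖gradient (fun b : PiLp 2 fun _ : Fin m => EuclideanSpace ℝ (Fin d) =>
          ⟪v, codingMap T b x - codingMap T b y⟫) a‖ := by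
  have hδ0 : 0 ≤ δ := (norm_nonneg _).trans (hδ (x 0))
  have hδ1 : δ < 1 := by linarith
  have hr : (1 - 2 * δ) / (1 - δ) = 1 - δ / (1 - δ) := by
    have : 1 - δ ≠ 0 := by linarith
    field_simp
    ring
  rw [hr]
  simp only [codingMap_eq T δ hδ0 hδ1 hδ]
  obtain ⟨b, hbn, hbx, hby, hbi⟩ := exists_direction (x 0) (y 0) hxy v hv
  have h1 := codingMap_sub_le T δ hδ0 hδ1 hδ x b hbi
  have h2 := codingMap_sub_le T δ hδ0 hδ1 hδ y b hbi
  rw [hbx] at h1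
  rw [hby] at h2
  exact aux_gradient _ _ v hv a b hbn _ h1 h2

end SelfAffine
end
end

section
/- Let d ∈ ℕ and s > 1. Then there exist constants c, C > 0 depending only on d and s such that for every (x_1,…,x_d) ∈ ℝ^d \ {0}: c / (Σ_{i=1}^d |x_i|^{s−1}) ≤ ∫_ℝ dy / ((Σ_{i=1}^d |x_i|^s) + |y|^s) ≤ C / (Σ_{i=1}^d |x_i|^{s−1}). -/
open MeasureTheory

noncomputable section

lemma aux_integrable (s : ℝ) (hs : 1 < s) :
    Integrable (fun y : ℝ => (1 + |y| ^ s)⁻¹) := by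
  have h := integrable_one_add_norm (E := ℝ) (μ := volume) (r := s) (by simpa using hs)
  refine (h.const_mul ((2 : ℝ) ^ s)).mono' (Measurable.aestronglyMeasurable (by fun_prop))
    (Filter.Eventually.of_forall fun y => ?_)
  have hy : 0 ≤ |y| := abs_nonneg y
  have hp : 0 ≤ |y| ^ s := Real.rpow_nonneg hy s
  rw [Real.norm_eq_abs, Real.norm_eq_abs, abs_of_nonneg (by positivity),
    Real.rpow_neg (by positivity), ← div_eq_mul_inv, inv_eq_one_div,
    div_le_div_iff₀ (by positivity) (by positivity), one_mul]
  rcases le_total |y| 1 with h1 | h1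
  · calc (1 + |y|) ^ s ≤ 2 ^ s :=
          Real.rpow_le_rpow (by positivity) (by linarith) (by linarith)
      _ ≤ 2 ^ s * (1 + |y| ^ s) := le_mul_of_one_le_right (by positivity) (by linarith)
  · calc (1 + |y|) ^ s ≤ (2 * |y|) ^ s :=
          Real.rpow_le_rpow (by positivity) (by linarith) (by linarith)
      _ = 2 ^ s * |y| ^ s := Real.mul_rpow (by norm_num) hy
      _ ≤ 2 ^ s * (1 + |y| ^ s) := by gcongr; linarith

lemma aux_pos (s : ℝ) (hs : 1 < s) : 0 < ∫ y : ℝ, (1 + |y| ^ s)⁻¹ := by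
  have hpos : ∀ y : ℝ, 0 < (1 + |y| ^ s)⁻¹ := fun y => by positivity
  rw [integral_pos_iff_support_of_nonneg (fun y => (hpos y).le) (aux_integrable s hs)]
  have : Function.support (fun y : ℝ => (1 + |y| ^ s)⁻¹) = Set.univ := by
    ext y; simpa using (inv_pos.mp (hpos y)).ne'
  rw [this]; simp

lemma aux_scale (s R : ℝ) (hR : 0 < R) :
    ∫ y : ℝ, (R ^ s + |y| ^ s)⁻¹ = (∫ y : ℝ, (1 + |y| ^ s)⁻¹) / R ^ (s - 1) := by
  have h := Measure.integral_comp_div (fun y : ℝ => (1 + |y| ^ s)⁻¹) R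
  have h2 : ∀ y : ℝ, (R ^ s + |y| ^ s)⁻¹ = (R ^ s)⁻¹ * (1 + |y / R| ^ s)⁻¹ := by
    intro y
    have : 0 < R ^ s := Real.rpow_pos_of_pos hR s
    rw [abs_div, abs_of_pos hR, Real.div_rpow (abs_nonneg y) hR.le, ← mul_inv]
    congr 1
    field_simp
  simp_rw [h2]
  rw [integral_const_mul, h, abs_of_pos hR, smul_eq_mul, Real.rpow_sub hR, Real.rpow_one]
  have : 0 < R ^ s := Real.rpow_pos_of_pos hR s
  field_simp

/-- **Lemma 3.7.** Let `d ∈ ℕ` and `s > 1`. Then, with constants depending only on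
`d` and `s`, for every `(x_1, …, x_d) ∈ ℝ^d \ {0}`,
`∫_ℝ dy / ((∑_i |x_i|^s) + |y|^s) ≈ (∑_i |x_i|^{s−1})⁻¹`. -/
theorem integral_inv_sum_abs_rpow_add_abs_rpow_comparison (d : ℕ) (s : ℝ) (hs : 1 < s) :
    ∃ c C : ℝ, 0 < c ∧ 0 < C ∧
      ∀ x : Fin d → ℝ, x ≠ 0 →
        c / (∑ i : Fin d, |x i| ^ (s - 1)) ≤
            (∫ y : ℝ, ((∑ i : Fin d, |x i| ^ s) + |y| ^ s)⁻¹) ∧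
          (∫ y : ℝ, ((∑ i : Fin d, |x i| ^ s) + |y| ^ s)⁻¹) ≤
            C / (∑ i : Fin d, |x i| ^ (s - 1)) := by
  have hI := aux_pos s hs
  set I := ∫ y : ℝ, (1 + |y| ^ s)⁻¹ with hIdef
  refine ⟨I, I * (d + 1), hI, by positivity, fun x hx => ?_⟩
  obtain ⟨j, hj⟩ := Function.ne_iff.mp hx
  have hj' : 0 < |x j| := abs_pos.mpr hj
  have hle : ∀ i, |x i| ^ s ≤ ∑ i, |x i| ^ s := fun i =>
    Finset.single_le_sum (f := fun i => |x i| ^ s) (fun k _ => by positivity) (Finset.mem_univ i)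
  have hS : 0 < ∑ i, |x i| ^ s := lt_of_lt_of_le (Real.rpow_pos_of_pos hj' s) (hle j)
  have hT : 0 < ∑ i, |x i| ^ (s - 1) := lt_of_lt_of_le (Real.rpow_pos_of_pos hj' (s - 1))
    (Finset.single_le_sum (f := fun i => |x i| ^ (s - 1)) (fun k _ => by positivity)
      (Finset.mem_univ j))
  obtain ⟨R, hR, hRS⟩ : ∃ R : ℝ, 0 < R ∧ R ^ s = ∑ i, |x i| ^ s :=
    ⟨_, Real.rpow_pos_of_pos hS s⁻¹, Real.rpow_inv_rpow hS.le (by linarith)⟩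
  have hxR : ∀ i, |x i| ≤ R := fun i => by
    have := hle i
    rw [← hRS] at this
    exact (Real.rpow_le_rpow_iff (abs_nonneg _) hR.le (by linarith)).mp this
  have hRp : 0 < R ^ (s - 1) := Real.rpow_pos_of_pos hR _
  have hsplit : ∀ a : ℝ, 0 ≤ a → a ^ s = a * a ^ (s - 1) := fun a ha => by
    have := Real.rpow_add_of_nonneg ha zero_le_one (by linarith : 0 ≤ s - 1)
    rw [Real.rpow_one] at this
    rw [← this]; congr 1; ring
  have hlow : R ^ (s - 1) ≤ ∑ i, |x i| ^ (s - 1) := by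
    have : R * R ^ (s - 1) ≤ R * ∑ i, |x i| ^ (s - 1) := by
      rw [← hsplit R hR.le, hRS, Finset.mul_sum]
      refine Finset.sum_le_sum fun i _ => ?_
      rw [hsplit _ (abs_nonneg _)]
      exact mul_le_mul_of_nonneg_right (hxR i) (by positivity)
    exact le_of_mul_le_mul_left this hR
  have hup : ∑ i, |x i| ^ (s - 1) ≤ (d + 1) * R ^ (s - 1) := by
    calc ∑ i, |x i| ^ (s - 1) ≤ ∑ _i : Fin d, R ^ (s - 1) :=
          Finset.sum_le_sum fun i _ =>
            Real.rpow_le_rpow (abs_nonneg _) (hxR i) (by linarith)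
      _ = d * R ^ (s - 1) := by simp
      _ ≤ (d + 1) * R ^ (s - 1) := by gcongr; linarith
  rw [← hRS, aux_scale s R hR, ← hIdef]
  constructor
  · exact div_le_div_of_nonneg_left hI.le hRp hlow
  · rw [div_le_div_iff₀ hRp hT, mul_assoc]
    exact mul_le_mul_of_nonneg_left hup hI.le
end
end

section
/- Let T_1,…,T_m be invertible d×d real matrices with t(T_1,…,T_m) > d. Then for every t with d < t < t(T_1,…,T_m), there exist a Borel probability measure μ on Σ = {1,…,m}^ℕ, a number r ∈ (0,1) and a constant C > 0 such that μ([I]) ≤ C g_t(I) r^{|I|} for every finite word I, where [I] denotes the cylinder set of sequences beginning with I and |I| is the length of I. -/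
open MeasureTheory Filter

noncomputable section

namespace SelfAffine

variable {d m : ℕ}

/-- `g_t(I) = α_d(T_I)^t |det T_I|`. -/
def gWord (T : Fin m → Matrix (Fin d) (Fin d) ℝ) (t : ℝ) {n : ℕ} (I : Fin n → Fin m) : ℝ :=
  alphaMin (wordProd T I) ^ t * |(wordProd T I).det|

/-- the quantity `t(T_1, …, T_m)`. -/
def tParam (T : Fin m → Matrix (Fin d) (Fin d) ℝ) : ℝ :=
  sInf { t : ℝ | 0 ≤ t ∧ ∀ n : ℕ, 0 < n →
    ∑ I : Fin n → Fin m, alphaMin (wordProd T I) ^ t * |(wordProd T I).det| ≤ 1 }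

/-- the cylinder set `[I] = {x ∈ Σ : x_1 … x_n = I}` of a finite word `I ∈ Σ_n`. -/
def cylinder {m n : ℕ} (I : Fin n → Fin m) : Set (ℕ → Fin m) :=
  { x | ∀ k : Fin n, x (k : ℕ) = I k }

theorem sub_opNorm_mul_le (A B : Matrix (Fin d) (Fin d) ℝ) :
    opNorm (A * B) ≤ opNorm A * opNorm B := by
  unfold opNorm
  rw [map_mul]
  exact norm_mul_le _ _

theorem sub_opNorm_inv_pos (hd : 0 < d) (A : Matrix (Fin d) (Fin d) ℝ) (hA : IsUnit A.det) :
    0 < opNorm A⁻¹ := by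
  unfold opNorm
  rw [norm_pos_iff]
  intro h
  have h0 : A⁻¹ = 0 := by
    have h' : Matrix.toEuclideanCLM (n := Fin d) (𝕜 := ℝ) A⁻¹ =
        Matrix.toEuclideanCLM (n := Fin d) (𝕜 := ℝ) 0 := by rw [h, map_zero]
    exact EquivLike.injective (Matrix.toEuclideanCLM (n := Fin d) (𝕜 := ℝ)) h'
  have h1 := Matrix.nonsing_inv_mul A hA
  rw [h0, zero_mul] at h1
  have h2 := congrFun (congrFun h1 ⟨0, hd⟩) ⟨0, hd⟩
  simp at h2

theorem sub_alphaMin_pos (hd : 0 < d) (A : Matrix (Fin d) (Fin d) ℝ) (hA : IsUnit A.det) :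
    0 < alphaMin A := inv_pos.mpr (sub_opNorm_inv_pos hd A hA)

theorem sub_alphaMin_mul (hd : 0 < d) (A B : Matrix (Fin d) (Fin d) ℝ) (hA : IsUnit A.det)
    (hB : IsUnit B.det) : alphaMin A * alphaMin B ≤ alphaMin (A * B) := by
  have hAB : IsUnit (A * B).det := by rw [Matrix.det_mul]; exact hA.mul hB
  have h := sub_opNorm_inv_pos hd (A * B) hAB
  unfold alphaMin
  rw [← mul_inv]
  apply inv_anti₀ h
  rw [Matrix.mul_inv_rev, mul_comm]
  exact sub_opNorm_mul_le _ _

theorem sub_det (T : Fin m → Matrix (Fin d) (Fin d) ℝ) (hinv : ∀ i, IsUnit (T i).det)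
    {n : ℕ} (I : Fin n → Fin m) : IsUnit (wordProd T I).det := by
  rw [← Matrix.isUnit_iff_isUnit_det]
  unfold wordProd
  apply List.prod_induction (p := IsUnit)
  · intro a b ha hb
    exact ha.mul hb
  · exact isUnit_one
  · intro a ha
    rw [List.mem_ofFn] at ha
    obtain ⟨k, rfl⟩ := ha
    exact (Matrix.isUnit_iff_isUnit_det _).mpr (hinv _)

theorem sub_g_pos (hd : 0 < d) (T : Fin m → Matrix (Fin d) (Fin d) ℝ)
    (hinv : ∀ i, IsUnit (T i).det) (t : ℝ) {n : ℕ} (I : Fin n → Fin m) : 0 < gWord T t I := by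
  unfold gWord
  have h := sub_det T hinv I
  exact mul_pos (Real.rpow_pos_of_pos (sub_alphaMin_pos hd _ h) _) (abs_pos.mpr h.ne_zero)

theorem sub_g_mul (hd : 0 < d) (T : Fin m → Matrix (Fin d) (Fin d) ℝ)
    (hinv : ∀ i, IsUnit (T i).det) (t : ℝ) (ht : 0 ≤ t) (x : ℕ → Fin m) (a b c : ℕ) :
    gWord T t (fun k : Fin b => x (a + k)) * gWord T t (fun k : Fin c => x (a + b + k)) ≤
      gWord T t (fun k : Fin (b + c) => x (a + k)) := by
  have hA := sub_det T hinv (fun k : Fin b => x (a + k))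
  have hB := sub_det T hinv (fun k : Fin c => x (a + b + k))
  have hw : wordProd T (fun k : Fin (b + c) => x (a + k)) =
      wordProd T (fun k : Fin b => x (a + k)) * wordProd T (fun k : Fin c => x (a + b + k)) := by
    unfold wordProd
    rw [List.ofFn_add, List.prod_append]
    simp [add_assoc]
  unfold gWord
  rw [hw]
  set A := wordProd T (fun k : Fin b => x (a + k))
  set B := wordProd T (fun k : Fin c => x (a + b + k))
  rw [Matrix.det_mul, abs_mul]
  have pA := sub_alphaMin_pos hd A hA
  have pB := sub_alphaMin_pos hd B hB
  have h1 : alphaMin A ^ t * alphaMin B ^ t ≤ alphaMin (A * B) ^ t := by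
    rw [← Real.mul_rpow pA.le pB.le]
    exact Real.rpow_le_rpow (by positivity) (sub_alphaMin_mul hd A B hA hB) ht
  calc _ = (alphaMin A ^ t * alphaMin B ^ t) * (|A.det| * |B.det|) := by ring
    _ ≤ _ := mul_le_mul_of_nonneg_right h1 (by positivity)

theorem sub_g_prod (hd : 0 < d) (T : Fin m → Matrix (Fin d) (Fin d) ℝ)
    (hinv : ∀ i, IsUnit (T i).det) (t : ℝ) (ht : 0 ≤ t) (x : ℕ → Fin m) (n q : ℕ) :
    (∏ j ∈ Finset.range q, gWord T t (fun k : Fin n => x (n * j + k))) ≤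
      gWord T t (fun k : Fin (n * q) => x (0 + k)) := by
  induction q with
  | zero =>
    have : 1 ≤ gWord T t (fun k : Fin 0 => x (0 + k)) := by
      have h := sub_alphaMin_mul hd (1 : Matrix (Fin d) (Fin d) ℝ) 1 (by simp) (by simp)
      have h1 : opNorm (1 : Matrix (Fin d) (Fin d) ℝ) = 1 := by
        have : Nonempty (Fin d) := ⟨⟨0, hd⟩⟩
        unfold opNorm
        rw [map_one]
        exact norm_one
      simp [gWord, wordProd, alphaMin, h1]
    simpa using this
  | succ q ih =>
    rw [Finset.prod_range_succ]
    refine le_trans (mul_le_mul_of_nonneg_right ih (sub_g_pos hd T hinv t _).le) ?_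
    have := sub_g_mul hd T hinv t ht x 0 (n * q) n
    simp only [zero_add] at this ⊢
    exact this

theorem sub_arith {S c r gq gN p : ℝ} {n q s : ℕ} (hS0 : 0 < S) (hc : 0 < c) (hr0 : 0 < r)
    (hr1 : r < 1) (hrn : r ^ n = S⁻¹) (hsn : s ≤ n) (hgq : 0 < gq) (h1 : gq * c ≤ gN)
    (hprod : p ≤ gq) : p * (S ^ q)⁻¹ ≤ S / c * gN * ((S ^ q)⁻¹ * r ^ s) := by
  have h3 : S⁻¹ ≤ r ^ s := by
    rw [← hrn]
    exact pow_le_pow_of_le_one hr0.le hr1.le hsn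
  have h4 : 1 ≤ S * r ^ s := by
    have := mul_le_mul_of_nonneg_left h3 hS0.le
    rwa [mul_inv_cancel₀ hS0.ne'] at this
  have h5 : gq ≤ gN / c := by rwa [le_div_iff₀ hc]
  have h6 : 0 ≤ gN / c := hgq.le.trans h5
  have h7 : 0 ≤ (S ^ q)⁻¹ := by positivity
  calc _ ≤ gN / c * (S ^ q)⁻¹ := mul_le_mul_of_nonneg_right (hprod.trans h5) h7
    _ ≤ gN / c * (S ^ q)⁻¹ * (S * r ^ s) := le_mul_of_one_le_right (mul_nonneg h6 h7) h4
    _ = _ := by ring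

/-- **Lemma 4.2.** Suppose `t(T_1,…,T_m) > d`. Then for every `t` with
`d < t < t(T_1,…,T_m)` there exist a Borel probability measure `μ` on `Σ`, a number
`r ∈ (0,1)` and a constant `C > 0` such that `μ([I]) ≤ C g_t(I) r^{|I|}` for every
finite word `I`. -/
theorem exists_measure_cylinder_le_gWord
    (T : Fin m → Matrix (Fin d) (Fin d) ℝ)
    (hinv : ∀ i, IsUnit (T i).det)
    (t : ℝ) (hdt : (d : ℝ) < t) (htt : t < tParam T) :
    ∃ (μ : Measure (ℕ → Fin m)) (r C : ℝ), IsProbabilityMeasure μ ∧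
      0 < r ∧ r < 1 ∧ 0 < C ∧
      ∀ (n : ℕ) (I : Fin n → Fin m),
        μ (cylinder I) ≤ ENNReal.ofReal (C * gWord T t I * r ^ n) := by
  classical
  have ht0 : 0 < t := lt_of_le_of_lt (Nat.cast_nonneg d) hdt
  have hnot : t ∉ { t : ℝ | 0 ≤ t ∧ ∀ n : ℕ, 0 < n →
      ∑ I : Fin n → Fin m, alphaMin (wordProd T I) ^ t * |(wordProd T I).det| ≤ 1 } :=
    notMem_of_lt_csInf htt ⟨0, fun s hs => hs.1⟩
  have hex : ∃ n : ℕ, 0 < n ∧ 1 < ∑ I : Fin n → Fin m, gWord T t I := by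
    by_contra hcon
    push Not at hcon
    exact hnot ⟨ht0.le, hcon⟩
  obtain ⟨n, hn, hS⟩ := hex
  have hd : 0 < d := by
    rcases Nat.eq_zero_or_pos d with h | h
    · exfalso
      subst h
      have h0 : ∀ I : Fin n → Fin m, gWord T t I = 0 := by
        intro I
        have : (wordProd T I)⁻¹ = 0 := Subsingleton.elim _ _
        simp [gWord, alphaMin, this, opNorm, Real.zero_rpow ht0.ne']
      simp [h0] at hS
      linarith
    · exact h
  set S := ∑ I : Fin n → Fin m, gWord T t I with hSdef
  have hS0 : 0 < S := by linarith
  have gpos : ∀ {N : ℕ} (I : Fin N → Fin m), 0 < gWord T t I :=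
    fun I => sub_g_pos hd T hinv t I
  -- lower bound on short words
  obtain ⟨c, hc, hcle⟩ : ∃ c : ℝ, 0 < c ∧ ∀ s < n, ∀ K : Fin s → Fin m, c ≤ gWord T t K := by
    have : Nonempty (Σ s : Fin n, (Fin (s : ℕ) → Fin m)) := ⟨⟨⟨0, hn⟩, Fin.elim0⟩⟩
    obtain ⟨K0, hK0⟩ := Finite.exists_min
      (fun K : (Σ s : Fin n, (Fin (s : ℕ) → Fin m)) => gWord T t K.2)
    exact ⟨gWord T t K0.2, gpos _, fun s hs K => hK0 ⟨⟨s, hs⟩, K⟩⟩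
  -- the block measure
  let p : PMF (Fin n → Fin m) := PMF.ofFintype (fun I => ENNReal.ofReal (gWord T t I / S)) (by
    rw [← ENNReal.ofReal_sum_of_nonneg (fun I _ => (div_pos (gpos I) hS0).le),
      ← Finset.sum_div, div_self hS0.ne', ENNReal.ofReal_one])
  let ν : Measure (Fin n → Fin m) := p.toMeasure
  have : IsProbabilityMeasure ν := PMF.toMeasure.isProbabilityMeasure p
  have hν : ∀ I, ν {I} = ENNReal.ofReal (gWord T t I / S) := by
    intro I
    rw [PMF.toMeasure_apply_singleton p I (measurableSet_singleton I)]
    rfl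
  let P : Measure (ℕ → Fin n → Fin m) := Measure.infinitePi (fun _ => ν)
  let F : (ℕ → Fin n → Fin m) → (ℕ → Fin m) := fun y k => y (k / n) ⟨k % n, Nat.mod_lt _ hn⟩
  have hF : Measurable F := by
    refine measurable_pi_lambda _ fun k => ?_
    exact (measurable_pi_apply _).comp (measurable_pi_apply _)
  have hcyl : ∀ (N : ℕ) (I : Fin N → Fin m), MeasurableSet (cylinder I) := by
    intro N I
    have : cylinder I = ⋂ k : Fin N, (fun x : ℕ → Fin m => x k) ⁻¹' {I k} := by
      ext x; simp [cylinder]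
    rw [this]
    exact MeasurableSet.iInter fun k => measurable_pi_apply _ (measurableSet_singleton _)
  set r : ℝ := (S⁻¹) ^ ((n : ℝ)⁻¹) with hr
  have hSi : 0 < S⁻¹ := inv_pos.mpr hS0
  have hSi1 : S⁻¹ < 1 := inv_lt_one_of_one_lt₀ hS
  have hr0 : 0 < r := Real.rpow_pos_of_pos hSi _
  have hr1 : r < 1 := Real.rpow_lt_one hSi.le hSi1 (by positivity)
  have hrn : r ^ n = S⁻¹ := Real.rpow_inv_natCast_pow hSi.le hn.ne'
  refine ⟨P.map F, r, S / c, Measure.isProbabilityMeasure_map hF.aemeasurable, hr0, hr1,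
    by positivity, ?_⟩
  intro N I
  rw [Measure.map_apply hF (hcyl N I)]
  rcases (cylinder I).eq_empty_or_nonempty with he | ⟨x, hx⟩
  · simp [he]
  have hIx : I = fun k : Fin N => x (0 + k) := by
    funext k
    simpa using (hx k).symm
  have hN : n * (N / n) + N % n = N := Nat.div_add_mod N n
  set q := N / n with hq
  set s := N % n with hs
  have hsn : s < n := Nat.mod_lt _ hn
  let B : ℕ → (Fin n → Fin m) := fun j k => x (n * j + k)
  have hsub : F ⁻¹' (cylinder I) ⊆ Set.pi (Finset.range q) (fun j => {B j}) := by
    intro y hy j hj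
    have hj' : j < q := by simpa using hj
    rw [Set.mem_singleton_iff]
    funext k
    have hlt : n * j + k < N := by
      have : n * (j + 1) ≤ n * q := Nat.mul_le_mul_left n hj'
      have := k.2
      rw [mul_add] at *
      omega
    have h1 := hy ⟨n * j + k, hlt⟩
    have h2 := hx ⟨n * j + k, hlt⟩
    rw [← h2] at h1
    simp only [F] at h1
    have e1 : (n * j + k) / n = j := by
      rw [Nat.mul_add_div hn, Nat.div_eq_of_lt k.2, add_zero]
    have e2 : (n * j + k) % n = k := by
      rw [Nat.mul_add_mod, Nat.mod_eq_of_lt k.2]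
    simp only [e1, e2] at h1
    exact h1
  refine (measure_mono hsub).trans ?_
  rw [Measure.infinitePi_pi (fun _ => ν) (fun j _ => measurableSet_singleton (B j))]
  simp only [hν]
  rw [← ENNReal.ofReal_prod_of_nonneg (fun j _ => (div_pos (gpos (B j)) hS0).le)]
  apply ENNReal.ofReal_le_ofReal
  rw [Finset.prod_div_distrib, Finset.prod_const, Finset.card_range]
  have hprod := sub_g_prod hd T hinv t ht0.le x n q
  have hmul := sub_g_mul hd T hinv t ht0.le x 0 (n * q) s
  have hcs := hcle s hsn (fun k : Fin s => x (0 + n * q + k))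
  have hg : gWord T t I = gWord T t (fun k : Fin (n * q + s) => x (0 + k)) := by
    rw [hIx, hN]
  rw [hg]
  set gN := gWord T t (fun k : Fin (n * q + s) => x (0 + k))
  have hgq := gpos (fun k : Fin (n * q) => x (0 + k))
  set gq := gWord T t (fun k : Fin (n * q) => x (0 + k))
  have h1 : gq * c ≤ gN := (mul_le_mul_of_nonneg_left hcs hgq.le).trans hmul
  have h2 : r ^ N = (S ^ q)⁻¹ * r ^ s := by
    rw [← hN, pow_add, pow_mul, hrn, inv_pow]
  rw [h2, div_eq_mul_inv]
  exact sub_arith hS0 hc hr0 hr1 hrn hsn.le hgq h1 hprod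

end SelfAffine
end
end

section
/- Let T_1,…,T_m be pairwise commuting invertible d×d real matrices with Σ_{i=1}^m |det(T_i)|^2 > 1. Then there exist a real number t > 2, a positive integer N, and a d×d matrix A ∈ { T_I : I ∈ Σ_N } such that #{ I ∈ Σ_N : T_I = A } · |det(A)|^t > 1. -/
open MeasureTheory

noncomputable section

namespace SelfAffine

variable {d m : ℕ}

theorem exists_growth (S : ℝ) (hS : 1 < S) (m : ℕ) :
    ∃ N : ℕ, 0 < N ∧ ((N : ℝ) + 1) ^ m < S ^ N := by
  have h := (Filter.tendsto_add_atTop_iff_nat 1).2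
    (tendsto_pow_const_div_const_pow_of_one_lt m hS)
  have hS0 : 0 < S := by linarith
  have h1 := h.eventually (gt_mem_nhds (show (0 : ℝ) < 1 / S by positivity))
  obtain ⟨N, hN, hN0⟩ := (h1.and (Filter.eventually_gt_atTop 0)).exists
  refine ⟨N, hN0, ?_⟩
  rw [div_lt_div_iff₀ (by positivity) hS0, pow_succ, one_mul] at hN
  push_cast at hN
  exact lt_of_mul_lt_mul_right hN hS0.le

theorem det_wordProd (T : Fin m → Matrix (Fin d) (Fin d) ℝ) {n : ℕ} (I : Fin n → Fin m) :
    |(wordProd T I).det| ^ 2 = ∏ k, |(T (I k)).det| ^ 2 := by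
  have h : (wordProd T I).det = ∏ k, (T (I k)).det := by
    unfold wordProd
    have := map_list_prod (Matrix.detMonoidHom (n := Fin d) (R := ℝ))
      (List.ofFn fun k => T (I k))
    rw [Matrix.coe_detMonoidHom] at this
    rw [this, List.map_ofFn, List.prod_ofFn]
    rfl
  rw [h, Finset.abs_prod, Finset.prod_pow]

theorem wordProd_eq_of_count (T : Fin m → Matrix (Fin d) (Fin d) ℝ)
    (hcomm : ∀ i j, T i * T j = T j * T i) {n : ℕ} (I J : Fin n → Fin m)
    (h : ∀ i, (List.ofFn I).count i = (List.ofFn J).count i) :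
    wordProd T I = wordProd T J := by
  have hp : (List.ofFn I).Perm (List.ofFn J) := List.perm_iff_count.2 h
  have e : ∀ K : Fin n → Fin m, wordProd T K = ((List.ofFn K).map T).prod := by
    intro K
    rw [List.map_ofFn]
    rfl
  rw [e, e]
  refine (hp.map T).prod_eq' ?_
  rw [List.pairwise_map]
  exact List.pairwise_of_forall (fun i j => hcomm i j)

/-- **Estimate (5.3).** If the `T_i` pairwise commute, are invertible and
`∑_i |det T_i|² > 1`, then there exist `t > 2`, a positive integer `N` and a matrix
`A ∈ { T_I : I ∈ Σ_N }` such that `#{ I ∈ Σ_N : T_I = A } · |det A|^t > 1`. -/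
theorem exists_word_class_card_mul_det_rpow_gt_one
    (T : Fin m → Matrix (Fin d) (Fin d) ℝ)
    (hinv : ∀ i, IsUnit (T i).det)
    (hcomm : ∀ i j, T i * T j = T j * T i)
    (hsum : 1 < ∑ i : Fin m, |(T i).det| ^ 2) :
    ∃ (t : ℝ) (N : ℕ) (A : Matrix (Fin d) (Fin d) ℝ), 2 < t ∧ 0 < N ∧
      (∃ I : Fin N → Fin m, wordProd T I = A) ∧
      1 < (Nat.card { I : Fin N → Fin m // wordProd T I = A } : ℝ) * |A.det| ^ t := by
  classical
  obtain ⟨N, hN0, hN⟩ := exists_growth _ hsum m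
  let c : (Fin N → Fin m) → (Fin m → Fin (N + 1)) := fun I i =>
    ⟨(List.ofFn I).count i, by
      have := List.count_le_length (a := i) (l := List.ofFn I)
      rw [List.length_ofFn] at this
      omega⟩
  have hc : ∀ I J, c I = c J → wordProd T I = wordProd T J := by
    intro I J h
    refine wordProd_eq_of_count T hcomm I J fun i => ?_
    exact congrArg Fin.val (congrFun h i)
  have hS : (∑ i : Fin m, |(T i).det| ^ 2) ^ N
      = ∑ v, ∑ I with c I = v, |(wordProd T I).det| ^ 2 := by
    rw [Finset.sum_fiberwise, Fintype.sum_pow]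
    exact Finset.sum_congr rfl fun I _ => (det_wordProd T I).symm
  obtain ⟨v, hv⟩ : ∃ v, 1 < ∑ I with c I = v, |(wordProd T I).det| ^ 2 := by
    by_contra! hcon
    have h1 := Finset.sum_le_sum (s := Finset.univ) (fun v _ => hcon v)
    rw [← hS] at h1
    simp at h1
    simp at hN
    linarith
  obtain ⟨I0, hI0⟩ : (Finset.univ.filter fun I => c I = v).Nonempty := by
    by_contra hne
    rw [Finset.not_nonempty_iff_eq_empty] at hne
    rw [hne, Finset.sum_empty] at hv
    linarith
  have hI0 : c I0 = v := by simpa using hI0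
  have hkey : 1 < (Nat.card { I : Fin N → Fin m // wordProd T I = wordProd T I0 } : ℝ)
      * |(wordProd T I0).det| ^ (2 : ℝ) := by
    refine hv.trans_le ?_
    rw [Real.rpow_ofNat, Nat.card_eq_fintype_card, Fintype.card_subtype, ← nsmul_eq_mul,
      ← Finset.sum_const]
    have hsub : (Finset.univ.filter fun I => c I = v) ⊆
        Finset.univ.filter fun I => wordProd T I = wordProd T I0 := by
      intro I hI
      simp only [Finset.mem_filter, Finset.mem_univ, true_and] at hI ⊢
      exact hc _ _ (hI.trans hI0.symm)
    refine (Finset.sum_le_sum_of_subset_of_nonneg hsub fun _ _ _ => by positivity).trans ?_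
    refine Finset.sum_le_sum fun I hI => ?_
    rw [(Finset.mem_filter.1 hI).2]
  have hpos : 0 < |(wordProd T I0).det| := by
    rcases (abs_nonneg (wordProd T I0).det).eq_or_lt with h | h
    · rw [← h, Real.zero_rpow (by norm_num)] at hkey
      linarith
    · exact h
  have hcont : Continuous fun t : ℝ =>
      (Nat.card { I : Fin N → Fin m // wordProd T I = wordProd T I0 } : ℝ)
      * |(wordProd T I0).det| ^ t :=
    continuous_const.mul (Real.continuous_const_rpow hpos.ne')
  have hev := hcont.continuousAt.eventually (lt_mem_nhds hkey)
  have hev2 := (hev.filter_mono (nhdsWithin_le_nhds (s := Set.Ioi 2))).and self_mem_nhdsWithin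
  obtain ⟨t, ht, ht2⟩ := hev2.exists
  exact ⟨t, N, wordProd T I0, ht2, hN0, ⟨I0, rfl⟩, ht⟩

end SelfAffine
end
end
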